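/- arXiv:2604.11475 — 10 statements merged into one kernel-verified Lean document; each statement's English description precedes it below -/
import Mathlib

section
/- Let K be a field, R = K[x,y,z], and m = (x,y,z). Let I ⊂ R be a monomial ideal admitting a primary decomposition I = Q ∩ L in which Q is a primary ideal whose radical is one of (x,y), (x,z), (y,z), L is a primary ideal with radical m, and the decomposition is irredundant (Q ⊄ L and L ⊄ Q). If m ∉ Ass_R(R/I^t) for some integer t ≥ 2, then m ∉ Ass_R(R/I^α) for all α ≥ t. -/
open MvPolynomial

/-- A monomial ideal: an ideal generated by monomials. -/
def IsMonomialIdeal {K : Type*} [Field K] {n : ℕ} (I : Ideal (MvPolynomial (Fin n) K)) : Prop :=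
  ∃ S : Set (Fin n →₀ ℕ), I = Ideal.span ((fun d => monomial d (1 : K)) '' S)

/-!
If `m ∉ Ass(R/I^t)`, where `I = Q ⊓ L` and `m ≤ √L`, then `I^t` is saturated with respect to `m`.
As a power of every element of `m` multiplies `Q^t` into `I^t`, this forces `I^t = Q^t`, and hence
`I^α = Q^α` for all `α ≥ t`. It remains to see that `m ∉ Ass(R/Q^α)`. If `√Q = m`, then
`√(I^t) = m` and so `m ∈ Ass(R/I^t)`, a contradiction. Otherwise some variable `X i` is not in `√Q`;
since `I` is a monomial ideal, `Q` is then generated by monomials not involving `X i`. So is `Q^α`,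
and `X i ∈ m` is regular on `R/Q^α`.
-/

section OrderedMonoid

variable {M : Type*} [CommMonoid M] [PartialOrder M] [MulLeftMono M]

theorem pow_eq_pow_of_le_of_pow_eq_pow {a b : M} (hab : a ≤ b) {t : ℕ} (ht : t ≠ 0)
    (h : a ^ t = b ^ t) {n : ℕ} (hn : t ≤ n) : a ^ n = b ^ n := by
  induction n, hn using Nat.le_induction with
  | base => exact h
  | succ n hn ih =>
    obtain ⟨s, rfl⟩ := Nat.exists_eq_succ_of_ne_zero (by lia : n ≠ 0)
    refine le_antisymm (pow_le_pow_left' hab _) ?_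
    calc b ^ (s + 1 + 1) = b * a ^ (s + 1) := by rw [pow_succ', ih]
      _ = a * (b * a ^ s) := by rw [pow_succ', mul_left_comm]
      _ ≤ a * (b * b ^ s) := by gcongr
      _ = a ^ (s + 1 + 1) := by rw [← pow_succ', ← ih, ← pow_succ']

end OrderedMonoid

section AssociatedPrimes

theorem mem_of_mul_pow_mem_of_isPrimary {R : Type*} [CommSemiring R] {Q : Ideal R}
    (hQ : Q.IsPrimary) {a x : R} {n : ℕ} (h : a * x ^ n ∈ Q) (hx : x ∉ Q.radical) : a ∈ Q :=
  ((Ideal.isPrimary_iff.mp hQ).2 h).resolve_right fun hn ↦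
    hx ((Ideal.isPrime_radical hQ).mem_of_pow_mem n hn)

theorem mem_associatedPrimes_of_le_radical_colon {R M : Type*} [CommSemiring R] [AddCommMonoid M]
    [Module R M] {m : Ideal R} (hm : m.IsMaximal) {x : M} (hx : x ≠ 0)
    (hle : m ≤ ((⊥ : Submodule R M).colon {x}).radical) : m ∈ associatedPrimes R M :=
  ⟨hm.isPrime, x, hm.eq_of_le (by simpa [Ideal.radical_eq_top] using hx) hle⟩

variable {R : Type*} [CommRing R]

theorem mem_colon_bot_singleton_mk {J : Ideal R} {x f : R} :
    x ∈ (⊥ : Submodule R (R ⧸ J)).colon {Ideal.Quotient.mk J f} ↔ x * f ∈ J := by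
  rw [Submodule.mem_colon_singleton, Submodule.mem_bot, Algebra.smul_def,
    Ideal.Quotient.algebraMap_eq, ← map_mul, Ideal.Quotient.eq_zero_iff_mem]

theorem inf_pow_eq_pow_of_notMem_associatedPrimes {m Q L : Ideal R} (hm : m.IsMaximal)
    (hL : m ≤ L.radical) {t : ℕ} (hass : m ∉ associatedPrimes R (R ⧸ (Q ⊓ L) ^ t)) :
    (Q ⊓ L) ^ t = Q ^ t := by
  refine le_antisymm (Ideal.pow_right_mono inf_le_left t) fun f hf ↦ ?_
  by_contra hfI
  refine hass <| mem_associatedPrimes_of_le_radical_colon hm (x := Ideal.Quotient.mk _ f)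
    (by rwa [Ne, Ideal.Quotient.eq_zero_iff_mem]) fun x hx ↦ ?_
  obtain ⟨n, hxn⟩ := hL hx
  have hQ : Ideal.span {x ^ n} * Q ≤ Q ⊓ L :=
    le_inf Ideal.mul_le_right (Ideal.mul_le_left.trans (by simpa using hxn))
  have hmem : (x ^ n) ^ t * f ∈ (Q ⊓ L) ^ t :=
    Ideal.pow_right_mono hQ t <| by
      rw [mul_pow]
      exact Ideal.mul_mem_mul (Ideal.pow_mem_pow (Ideal.mem_span_singleton_self _) t) hf
  exact ⟨n * t, mem_colon_bot_singleton_mk.mpr (by rwa [pow_mul])⟩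

theorem radical_mem_associatedPrimes_quotient {J : Ideal R} (hJ : J.radical.IsPrime) :
    J.radical ∈ associatedPrimes R (R ⧸ J) := by
  have hcolon : (⊥ : Submodule R (R ⧸ J)).colon {1} = J := by
    ext x
    rw [← map_one (Ideal.Quotient.mk J), mem_colon_bot_singleton_mk, mul_one]
  exact ⟨hJ, 1, by rw [hcolon]⟩

theorem notMem_of_isSMulRegular_of_mem_associatedPrimes [IsNoetherianRing R] {M : Type*}
    [AddCommGroup M] [Module R M] {r : R} (hr : IsSMulRegular M r) {P : Ideal R}
    (hP : P ∈ associatedPrimes R M) : r ∉ P := fun hrP ↦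
  (biUnion_associatedPrimes_eq_compl_regular R M).subset (Set.mem_biUnion hP hrP) hr

theorem le_of_inf_le_of_isSMulRegular {Q L J : Ideal R} {x : R} (hx : IsSMulRegular (R ⧸ J) x)
    (hxL : x ∈ L.radical) (h : Q ⊓ L ≤ J) : Q ≤ J := fun f hf ↦ by
  obtain ⟨n, hn⟩ := hxL
  exact mem_of_isSMulRegular_quotient_of_smul_mem (hx.pow n)
    (h ⟨Q.mul_mem_left _ hf, L.mul_mem_right _ hn⟩)

end AssociatedPrimes

section MonomialSpan

variable {σ : Type*}

/-- The monomial ideal of `MvPolynomial σ R` generated by the monomials with exponents in `S`.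
Unlike `IsMonomialIdeal`, it records the generators, so that their exponents can be controlled. -/
noncomputable abbrev monomialSpan (R : Type*) [CommSemiring R] (S : Set (σ →₀ ℕ)) :
    Ideal (MvPolynomial σ R) :=
  Ideal.span ((fun d ↦ monomial d 1) '' S)

section CommSemiring

variable {R : Type*} [CommSemiring R]

open scoped Pointwise in
theorem monomialSpan_mul (S T : Set (σ →₀ ℕ)) :
    monomialSpan R S * monomialSpan R T = monomialSpan R (S + T) := by
  rw [Ideal.span_mul_span', ← Set.image2_mul, ← Set.image2_add, Set.image2_image_left,
    Set.image2_image_right, monomialSpan, Set.image_image2]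
  simp only [monomial_mul, mul_one]

open scoped Pointwise in
theorem monomialSpan_pow (S : Set (σ →₀ ℕ)) (n : ℕ) :
    monomialSpan R S ^ n = monomialSpan R (n • S) := by
  induction n with
  | zero => simp [monomialSpan, ← Set.singleton_zero]
  | succ n ih => rw [pow_succ, ih, monomialSpan_mul, succ_nsmul]

theorem monomial_eq_monomial_erase_mul_X_pow (i : σ) (d : σ →₀ ℕ) :
    monomial d (1 : R) = monomial (d.erase i) 1 * X i ^ d i := by
  rw [X_pow_eq_monomial, monomial_mul, mul_one, Finsupp.erase_add_single]

theorem monomialSpan_le_monomialSpan_erase (i : σ) (S : Set (σ →₀ ℕ)) :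
    monomialSpan R S ≤ monomialSpan R (Finsupp.erase i '' S) := by
  rw [Ideal.span_le]
  rintro _ ⟨d, hd, rfl⟩
  beta_reduce
  rw [SetLike.mem_coe, monomial_eq_monomial_erase_mul_X_pow i]
  exact Ideal.mul_mem_right _ _ (Ideal.subset_span ⟨_, ⟨d, hd, rfl⟩, rfl⟩)

theorem monomialSpan_erase_le_of_isPrimary {i : σ} {Q : Ideal (MvPolynomial σ R)} (hQ : Q.IsPrimary)
    (hi : X i ∉ Q.radical) {S : Set (σ →₀ ℕ)} (hS : monomialSpan R S ≤ Q) :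
    monomialSpan R (Finsupp.erase i '' S) ≤ Q := by
  rw [Ideal.span_le]
  rintro _ ⟨_, ⟨d, hd, rfl⟩, rfl⟩
  refine mem_of_mul_pow_mem_of_isPrimary hQ (n := d i) ?_ hi
  rw [← monomial_eq_monomial_erase_mul_X_pow]
  exact hS (Ideal.subset_span ⟨d, hd, rfl⟩)

end CommSemiring

section CommRing

variable {R : Type*} [CommRing R] {i : σ}

theorem isSMulRegular_X_quotient_monomialSpan {S : Set (σ →₀ ℕ)} (hS : ∀ d ∈ S, d i = 0) :
    IsSMulRegular (MvPolynomial σ R ⧸ monomialSpan R S) (X i : MvPolynomial σ R) := by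
  refine (isSMulRegular_quotient_iff_mem_of_smul_mem _ _).mpr fun f hf ↦ ?_
  rw [mem_ideal_span_monomial_image] at hf ⊢
  intro e he
  obtain ⟨d, hd, hle⟩ := hf (Finsupp.single i 1 + e) <| by
    rwa [smul_eq_mul, mem_support_iff, coeff_X_mul, ← mem_support_iff]
  refine ⟨d, hd, fun j ↦ ?_⟩
  obtain rfl | hj := eq_or_ne j i
  · simp [hS d hd]
  · simpa [Finsupp.single_eq_of_ne hj] using hle j

open scoped Pointwise in
theorem isSMulRegular_X_quotient_monomialSpan_pow {S : Set (σ →₀ ℕ)} (hS : ∀ d ∈ S, d i = 0)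
    (n : ℕ) : IsSMulRegular (MvPolynomial σ R ⧸ monomialSpan R S ^ n) (X i : MvPolynomial σ R) := by
  rw [monomialSpan_pow]
  have hSker : S ⊆ AddMonoidHom.mker (Finsupp.applyAddHom (M := ℕ) i) := hS
  exact isSMulRegular_X_quotient_monomialSpan fun d hd ↦ AddSubmonoid.nsmul_subset hSker hd

theorem eq_monomialSpan_erase_of_isPrimary {Q L : Ideal (MvPolynomial σ R)} (hQ : Q.IsPrimary)
    (hiQ : X i ∉ Q.radical) (hiL : X i ∈ L.radical) {S : Set (σ →₀ ℕ)}
    (hS : Q ⊓ L = monomialSpan R S) : Q = monomialSpan R (Finsupp.erase i '' S) := by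
  refine le_antisymm ?_ (monomialSpan_erase_le_of_isPrimary hQ hiQ (hS.ge.trans inf_le_left))
  have hreg : IsSMulRegular (MvPolynomial σ R ⧸ monomialSpan R (Finsupp.erase i '' S))
      (X i : MvPolynomial σ R) :=
    isSMulRegular_X_quotient_monomialSpan (Set.forall_mem_image.mpr fun _ _ ↦ Finsupp.erase_same)
  exact le_of_inf_le_of_isSMulRegular hreg hiL
    (hS.le.trans (monomialSpan_le_monomialSpan_erase i S))

theorem isSMulRegular_X_quotient_pow_of_isPrimary {Q L : Ideal (MvPolynomial σ R)}
    (hQ : Q.IsPrimary) (hiQ : X i ∉ Q.radical) (hiL : X i ∈ L.radical) {S : Set (σ →₀ ℕ)}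
    (hS : Q ⊓ L = monomialSpan R S) (n : ℕ) :
    IsSMulRegular (MvPolynomial σ R ⧸ Q ^ n) (X i : MvPolynomial σ R) := by
  rw [eq_monomialSpan_erase_of_isPrimary hQ hiQ hiL hS]
  exact isSMulRegular_X_quotient_monomialSpan_pow
    (Set.forall_mem_image.mpr fun _ _ ↦ Finsupp.erase_same) n

end CommRing

end MonomialSpan

section IdealOfVars

theorem isMaximal_idealOfVars (σ K : Type*) [Field K] : (idealOfVars σ K).IsMaximal := by
  have hker : idealOfVars σ K = RingHom.ker (constantCoeff (σ := σ) (R := K)) := by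
    ext f
    rw [← pow_one (idealOfVars σ K), mem_pow_idealOfVars_iff', RingHom.mem_ker]
    simp [constantCoeff_eq, Finsupp.degree_eq_zero_iff]
  rw [hker]
  exact RingHom.ker_isMaximal_of_surjective _ fun c ↦ ⟨C c, constantCoeff_C _ c⟩

theorem idealOfVars_fin_three (R : Type*) [CommSemiring R] :
    idealOfVars (Fin 3) R = Ideal.span {X 0, X 1, X 2} := by
  rw [idealOfVars]
  congr 1
  ext f
  simp [Fin.exists_fin_succ, eq_comm]

end IdealOfVars

theorem stmt_0_general {K : Type*} [Field K] {n : ℕ} {I Q L : Ideal (MvPolynomial (Fin n) K)}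
    (hI : IsMonomialIdeal I) (hdec : I = Q ⊓ L) (hQ : Q.IsPrimary)
    (hL : idealOfVars (Fin n) K ≤ L.radical) {t : ℕ} (ht : t ≠ 0)
    (hm : idealOfVars (Fin n) K ∉ associatedPrimes _ (MvPolynomial (Fin n) K ⧸ I ^ t)) :
    ∀ α ≥ t, idealOfVars (Fin n) K ∉ associatedPrimes _ (MvPolynomial (Fin n) K ⧸ I ^ α) := by
  intro α hα
  have hmax := isMaximal_idealOfVars (Fin n) K
  have hpow : I ^ t = Q ^ t := by
    subst hdec
    exact inf_pow_eq_pow_of_notMem_associatedPrimes hmax hL hm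
  have hX (i : Fin n) : X i ∈ idealOfVars (Fin n) K := Ideal.subset_span ⟨i, rfl⟩
  obtain ⟨i, hi⟩ : ∃ i, X i ∉ Q.radical := by
    by_contra! hall
    have hQrad : idealOfVars (Fin n) K = Q.radical :=
      hmax.eq_of_le (Ideal.isPrime_radical hQ).ne_top
        (Ideal.span_le.mpr (Set.range_subset_iff.mpr hall))
    have hIrad : (I ^ t).radical = idealOfVars (Fin n) K := by
      rw [hpow, Ideal.radical_pow _ ht, hQrad]
    exact hm (hIrad ▸ radical_mem_associatedPrimes_quotient (hIrad ▸ hmax.isPrime))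
  obtain ⟨S, hS⟩ := hI
  rw [pow_eq_pow_of_le_of_pow_eq_pow (hdec.le.trans inf_le_left) ht hpow hα]
  exact fun hmem ↦ notMem_of_isSMulRegular_of_mem_associatedPrimes
    (isSMulRegular_X_quotient_pow_of_isPrimary hQ hi (hL (hX i)) (hdec.symm.trans hS) α) hmem (hX i)

theorem stmt_0 {K : Type*} [Field K]
    (I Q L : Ideal (MvPolynomial (Fin 3) K))
    (hI : IsMonomialIdeal I)
    (hdec : I = Q ⊓ L)
    (hQ : Q.IsPrimary) (hL : L.IsPrimary)
    (hQrad : Q.radical = Ideal.span {X 0, X 1} ∨ Q.radical = Ideal.span {X 0, X 2} ∨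
      Q.radical = Ideal.span {X 1, X 2})
    (hLrad : L.radical = Ideal.span {X 0, X 1, X 2})
    (hirr1 : ¬ Q ≤ L) (hirr2 : ¬ L ≤ Q)
    (t : ℕ) (ht : 2 ≤ t)
    (hm : Ideal.span {(X 0 : MvPolynomial (Fin 3) K), X 1, X 2} ∉
      associatedPrimes (MvPolynomial (Fin 3) K) (MvPolynomial (Fin 3) K ⧸ I ^ t)) :
    ∀ α ≥ t, Ideal.span {(X 0 : MvPolynomial (Fin 3) K), X 1, X 2} ∉
      associatedPrimes (MvPolynomial (Fin 3) K) (MvPolynomial (Fin 3) K ⧸ I ^ α) := by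
  rw [← idealOfVars_fin_three] at hm hLrad ⊢
  exact stmt_0_general hI hdec hQ hLrad.ge (by lia) hm
end

section
/- Let K be a field, R = K[x,y,z], and let m, r ≥ 1 be integers. Let I = (x^{m+3}, y^{m+3}, x^{m+2}y, x y^{m+2}, x^{m+1} y^{2} z^{r}) ⊂ R. Then for every integer s with 1 ≤ s ≤ m, Ass_R(R/I^s) = {(x,y), (x,y,z)}. -/
open MvPolynomial

/-!
Let `J` be a monomial ideal of a polynomial ring over a domain. If `f * u ∈ J` and `a` is the
leading exponent of `f ≠ 0`, then some power of `x ^ a` multiplies `u` into `J`: after passing to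
the saturation of `J` by `x ^ a` and dropping the terms of `u` that lie in it, the leading term of
`f * u` cannot be cancelled. So an associated prime of the quotient by `J` contains the leading
monomial of each of its nonzero elements, and is therefore generated by variables.

Since `x` and `y` are nilpotent modulo `I ^ s`, only `(x, y)` and `(x, y, z)` are possible. They are
the annihilators of the classes of `y ^ ((m + 3) * s - 1)` and of
`x ^ ((m + 2) * s - 1) * y ^ (m + 1) * z ^ (r - 1)`, respectively. That these monomials and the
relevant multiples avoid `I ^ s` rests on two invariants of the generators of `I ^ s`: they have
degree `(m + 3) * s` in `x` and `y`, and those not divisible by `z ^ r` have `y`-exponent at most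
`s` or at least `m + 2`.
-/

universe u

section AssociatedPrimesOfQuotients

variable {S : Type*} [CommRing S]

lemma mk_mem_colon {I : Ideal S} {f u : S} :
    f ∈ (⊥ : Submodule S (S ⧸ I)).colon {Ideal.Quotient.mk I u} ↔ f * u ∈ I := by
  rw [Submodule.mem_colon_singleton, Submodule.mem_bot, ← Ideal.Quotient.eq_zero_iff_mem, map_mul]
  rfl

lemma le_of_isAssociatedPrime_quotient_pow {I P : Ideal S} {n : ℕ}
    (hP : IsAssociatedPrime P (S ⧸ I ^ n)) : I ≤ P := by
  have hle := hP.annihilator_le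
  rw [Submodule.annihilator_top, Ideal.annihilator_quotient] at hle
  exact hP.isPrime.le_of_pow_le hle

end AssociatedPrimesOfQuotients

section MonomialIdeals

variable {σ R : Type*}

section CommSemiring

variable [CommSemiring R]

lemma mem_restrictSupportIdeal {U : Set (σ →₀ ℕ)} {hU : IsUpperSet U} {f : MvPolynomial σ R} :
    f ∈ restrictSupportIdeal R U hU ↔ ∀ a ∈ f.support, a ∈ U :=
  Iff.rfl

lemma monomial_mul_mem_restrictSupportIdeal {U : Set (σ →₀ ℕ)} {hU : IsUpperSet U}
    {a : σ →₀ ℕ} {f : MvPolynomial σ R} :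
    monomial a 1 * f ∈ restrictSupportIdeal R U hU ↔ ∀ b ∈ f.support, a + b ∈ U := by
  rw [mem_restrictSupportIdeal]
  constructor
  · intro h b hb
    refine h _ ?_
    rwa [mem_support_iff, coeff_monomial_mul, one_mul, ← mem_support_iff]
  · intro h c hc
    rw [mem_support_iff, coeff_monomial_mul', ite_ne_right_iff, one_mul] at hc
    have := h (c - a) (mem_support_iff.mpr hc.2)
    rwa [add_tsub_cancel_of_le hc.1] at this

lemma span_monomial_eq_restrictSupportIdeal (S : Set (σ →₀ ℕ)) :
    Ideal.span ((fun a => monomial a (1 : R)) '' S) =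
      restrictSupportIdeal R (upperClosure S) (upperClosure S).upper := by
  ext f
  exact mem_ideal_span_monomial_image

open scoped Pointwise in
lemma span_monomial_pow (S : Set (σ →₀ ℕ)) (n : ℕ) :
    Ideal.span ((fun a => monomial a (1 : R)) '' S) ^ n =
      Ideal.span ((fun a => monomial a (1 : R)) '' (n • S)) := by
  induction n with
  | zero => simp
  | succ n ih =>
    have himage : (fun a => monomial a (1 : R)) '' (n • S + S) =
        (fun a => monomial a (1 : R)) '' (n • S) * (fun a => monomial a (1 : R)) '' S :=
      Set.image_image2_distrib fun a b => by rw [monomial_mul, one_mul]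
    rw [pow_succ, ih, Ideal.span_mul_span', succ_nsmul, himage]

lemma exists_add_mem_restrictSupport (s : Set (σ →₀ ℕ)) (f : MvPolynomial σ R) :
    ∃ g ∈ restrictSupport R s, ∃ h ∈ restrictSupport R sᶜ, g + h = f := by
  rw [← Submodule.mem_sup, restrictSupport_eq_span, restrictSupport_eq_span,
    ← Submodule.span_union, ← Set.image_union, Set.union_compl_self, ← restrictSupport_eq_span,
    restrictSupport_univ]
  exact Submodule.mem_top

lemma exists_monomial_mul_mem_of_forall_support {U : Set (σ →₀ ℕ)} {hU : IsUpperSet U}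
    {a : σ →₀ ℕ} {u : MvPolynomial σ R}
    (h : ∀ b ∈ u.support, ∃ n : ℕ, n • a + b ∈ U) :
    ∃ n : ℕ, monomial (n • a) 1 * u ∈ restrictSupportIdeal R U hU := by
  choose! n hn using h
  refine ⟨u.support.sup n, monomial_mul_mem_restrictSupportIdeal.mpr fun b hb => ?_⟩
  refine hU ?_ (hn b hb)
  gcongr
  exact Finset.le_sup hb

end CommSemiring

lemma nonempty_monomialOrder (σ : Type u) : Nonempty (MonomialOrder.{u, u} σ) := by
  let : LinearOrder σ := IsWellOrder.linearOrder (WellOrderingRel (α := σ))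
  have : WellFoundedLT σ := ⟨WellOrderingRel.isWellOrder.wf⟩
  exact ⟨(MonomialOrder.lex : MonomialOrder σᵒᵈ)⟩

variable [CommRing R]

lemma sub_aeval_mem_span_X (A : Set σ) [DecidablePred (· ∈ A)] (f : MvPolynomial σ R) :
    f - aeval (fun i => if i ∈ A then 0 else X i) f ∈ Ideal.span (X '' A) := by
  rw [← Ideal.Quotient.eq]
  set J : Ideal (MvPolynomial σ R) := Ideal.span (X '' A)
  suffices Ideal.Quotient.mkₐ R J = (Ideal.Quotient.mkₐ R J).comp
      (aeval fun i => if i ∈ A then 0 else X i) from DFunLike.congr_fun this f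
  ext i
  by_cases hi : i ∈ A
  · have : (X i : MvPolynomial σ R) ∈ J := Ideal.subset_span ⟨i, hi, rfl⟩
    simpa [hi, Ideal.Quotient.eq_zero_iff_mem] using this
  · simp [hi]

lemma isPrime_span_X [IsDomain R] (A : Set σ) :
    (Ideal.span (X '' A : Set (MvPolynomial σ R))).IsPrime := by
  classical
  have hker : RingHom.ker (aeval (R := R) fun i => if i ∈ A then 0 else (X i : MvPolynomial σ R)) =
      Ideal.span (X '' A) := by
    refine le_antisymm (fun f hf => ?_) (Ideal.span_le.mpr ?_)
    · have hsub := sub_aeval_mem_span_X A f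
      rwa [RingHom.mem_ker.mp hf, sub_zero] at hsub
    · rintro _ ⟨i, hi, rfl⟩
      simp only [SetLike.mem_coe, RingHom.mem_ker, aeval_X, if_pos hi]
  exact hker ▸ RingHom.ker_isPrime _

variable {U : Set (σ →₀ ℕ)} {hU : IsUpperSet U}

lemma mem_restrictSupportIdeal_of_mul_mem [NoZeroDivisors R] (ord : MonomialOrder σ)
    {f u : MvPolynomial σ R} (hf : f ≠ 0) (hdeg : ∀ b, ord.degree f + b ∈ U → b ∈ U)
    (hfu : f * u ∈ restrictSupportIdeal R U hU) : u ∈ restrictSupportIdeal R U hU := by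
  obtain ⟨v, hv, w, hw, rfl⟩ := exists_add_mem_restrictSupport U u
  replace hv : v ∈ restrictSupportIdeal R U hU := hv
  suffices w = 0 by rwa [this, add_zero]
  by_contra hw0
  rw [mul_add, Submodule.add_mem_iff_right _ (Ideal.mul_mem_left _ _ hv)] at hfu
  have hmem : ord.degree (f * w) ∈ U := hfu (ord.degree_mem_support (mul_ne_zero hf hw0))
  rw [ord.degree_mul hf hw0] at hmem
  exact hw (ord.degree_mem_support hw0) (hdeg _ hmem)

lemma exists_monomial_mul_mem_of_mul_mem [NoZeroDivisors R] (ord : MonomialOrder σ)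
    {f u : MvPolynomial σ R} (hf : f ≠ 0) (hfu : f * u ∈ restrictSupportIdeal R U hU) :
    ∃ n : ℕ, monomial (n • ord.degree f) 1 * u ∈ restrictSupportIdeal R U hU := by
  -- The exponents of the saturation of the ideal by the leading monomial of `f`.
  let V : Set (σ →₀ ℕ) := {b | ∃ n : ℕ, n • ord.degree f + b ∈ U}
  have hV : IsUpperSet V := fun b c hbc ⟨n, hn⟩ => ⟨n, hU (by gcongr) hn⟩
  have hUV : U ⊆ V := fun b hb => ⟨0, by simpa using hb⟩
  have hu : u ∈ restrictSupportIdeal R V hV := by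
    refine mem_restrictSupportIdeal_of_mul_mem ord hf ?_ fun b hb => hUV (hfu hb)
    rintro b ⟨n, hn⟩
    exact ⟨n + 1, by rwa [succ_nsmul, add_assoc]⟩
  exact exists_monomial_mul_mem_of_forall_support hu

lemma monomial_degree_mem_of_isAssociatedPrime [NoZeroDivisors R] (ord : MonomialOrder σ)
    {P : Ideal (MvPolynomial σ R)}
    (hP : IsAssociatedPrime P (MvPolynomial σ R ⧸ restrictSupportIdeal R U hU))
    {f : MvPolynomial σ R} (hfP : f ∈ P) (hf : f ≠ 0) : monomial (ord.degree f) 1 ∈ P := by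
  obtain ⟨v, hv⟩ := hP.eq_radical_colon
  obtain ⟨u, rfl⟩ := Ideal.Quotient.mk_surjective v
  rw [hv] at hfP ⊢
  obtain ⟨k, hk⟩ := hfP
  obtain ⟨n, hn⟩ := exists_monomial_mul_mem_of_mul_mem ord (pow_ne_zero k hf) (mk_mem_colon.mp hk)
  rw [ord.degree_pow, smul_smul, ← one_pow (n * k), ← monomial_pow] at hn
  exact ⟨n * k, mk_mem_colon.mpr hn⟩

theorem eq_span_X_of_isAssociatedPrime [NoZeroDivisors R] {P : Ideal (MvPolynomial σ R)}
    (hP : IsAssociatedPrime P (MvPolynomial σ R ⧸ restrictSupportIdeal R U hU)) :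
    P = Ideal.span (X '' {i | X i ∈ P}) := by
  obtain ⟨ord⟩ := nonempty_monomialOrder σ
  have hle : Ideal.span (X '' {i | X i ∈ P}) ≤ P :=
    Ideal.span_le.mpr (Set.image_subset_iff.mpr fun i hi => hi)
  refine le_antisymm (fun f hf => ?_) hle
  obtain ⟨g, hg, h, hh, rfl⟩ :=
    exists_add_mem_restrictSupport {a | ∃ i, X i ∈ P ∧ a i ≠ 0} f
  replace hg : g ∈ Ideal.span (X '' {i | X i ∈ P}) := mem_ideal_span_X_image.mpr hg
  suffices h = 0 by rwa [this, add_zero]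
  by_contra hh0
  have hhP : h ∈ P := (Submodule.add_mem_iff_right _ (hle hg)).mp hf
  have hdeg := monomial_degree_mem_of_isAssociatedPrime ord hP hhP hh0
  rw [monomial_eq, C_1, one_mul, Finsupp.prod, hP.isPrime.prod_mem_iff] at hdeg
  obtain ⟨i, hi, hiP⟩ := hdeg
  exact hh (ord.degree_mem_support hh0)
    ⟨i, hP.isPrime.mem_of_pow_mem _ hiP, Finsupp.mem_support_iff.mp hi⟩

theorem isAssociatedPrime_span_X [IsDomain R] {A : Set σ} {a : σ →₀ ℕ}
    (hmem : ∀ i ∈ A, a + Finsupp.single i 1 ∈ U) (hnot : ∀ b, (∀ i ∈ A, b i = 0) → a + b ∉ U) :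
    IsAssociatedPrime (Ideal.span (X '' A : Set (MvPolynomial σ R)))
      (MvPolynomial σ R ⧸ restrictSupportIdeal R U hU) := by
  have hcolon : (⊥ : Submodule (MvPolynomial σ R)
      (MvPolynomial σ R ⧸ restrictSupportIdeal R U hU)).colon
        {Ideal.Quotient.mk _ (monomial a 1)} = Ideal.span (X '' A) := by
    ext f
    rw [mk_mem_colon, mul_comm, monomial_mul_mem_restrictSupportIdeal, mem_ideal_span_X_image]
    refine forall₂_congr fun b _ => ⟨fun hb => ?_, ?_⟩
    · by_contra! hzero
      exact hnot b hzero hb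
    · rintro ⟨i, hi, hbi⟩
      refine hU (add_le_add_right ?_ a) (hmem i hi)
      rwa [Finsupp.single_le_iff, Nat.one_le_iff_ne_zero]
  refine ⟨isPrime_span_X A, Ideal.Quotient.mk _ (monomial a 1), ?_⟩
  rw [hcolon, (isPrime_span_X A).radical]

end MonomialIdeals

section ThreeVariables

open scoped Pointwise

/-- The exponent vector of the monomial `x ^ a * y ^ b * z ^ c`, where `x`, `y`, `z` are the
variables `X 0`, `X 1`, `X 2`. -/
noncomputable def exponent (a b c : ℕ) : Fin 3 →₀ ℕ :=
  Finsupp.equivFunOnFinite.symm ![a, b, c]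

lemma monomial_exponent {R : Type*} [CommSemiring R] (a b c : ℕ) :
    monomial (exponent a b c) (1 : R) = X 0 ^ a * X 1 ^ b * X 2 ^ c := by
  rw [monomial_eq, Finsupp.prod_fintype _ _ (by simp)]
  simp [exponent, Fin.prod_univ_three]

lemma exponent_add (a b c a' b' c' : ℕ) :
    exponent a b c + exponent a' b' c' = exponent (a + a') (b + b') (c + c') := by
  ext i
  fin_cases i <;> rfl

lemma single_zero_one : Finsupp.single 0 1 = exponent 1 0 0 := by
  ext i
  fin_cases i <;> simp [exponent]

lemma single_one_one : Finsupp.single 1 1 = exponent 0 1 0 := by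
  ext i
  fin_cases i <;> simp [exponent]

lemma single_two_one : Finsupp.single 2 1 = exponent 0 0 1 := by
  ext i
  fin_cases i <;> simp [exponent]

@[simp] lemma exponent_zero (a b c : ℕ) : exponent a b c 0 = a := rfl
@[simp] lemma exponent_one (a b c : ℕ) : exponent a b c 1 = b := rfl
@[simp] lemma exponent_two (a b c : ℕ) : exponent a b c 2 = c := rfl

/-- The exponent vectors of the given generators of the ideal `I`, whose powers are handled as the
pointwise multiples `s • generatorExponents m r`. -/
def generatorExponents (m r : ℕ) : Set (Fin 3 →₀ ℕ) :=
  {exponent (m + 3) 0 0, exponent 0 (m + 3) 0, exponent (m + 2) 1 0, exponent 1 (m + 2) 0,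
    exponent (m + 1) 2 r}

lemma span_monomial_generatorExponents {R : Type*} [CommSemiring R] (m r : ℕ) :
    Ideal.span ((fun a => monomial a (1 : R)) '' generatorExponents m r) =
      Ideal.span {X 0 ^ (m + 3), X 1 ^ (m + 3), X 0 ^ (m + 2) * X 1,
        X 0 * X 1 ^ (m + 2), X 0 ^ (m + 1) * X 1 ^ 2 * X 2 ^ r} := by
  simp [generatorExponents, Set.image_insert_eq, monomial_exponent]

variable {m r s : ℕ}

lemma add_eq_of_mem_nsmul_generatorExponents {a : Fin 3 →₀ ℕ}
    (ha : a ∈ s • generatorExponents m r) : a 0 + a 1 = (m + 3) * s := by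
  induction s generalizing a with
  | zero => simp_all
  | succ s ih =>
    rw [succ_nsmul] at ha
    obtain ⟨b, hb, t, ht, rfl⟩ := ha
    have hdeg := ih hb
    obtain rfl | rfl | rfl | rfl | rfl := ht <;>
      simp only [Finsupp.add_apply, exponent_zero, exponent_one] <;> lia

lemma le_or_le_or_le_of_mem_nsmul_generatorExponents {a : Fin 3 →₀ ℕ}
    (ha : a ∈ s • generatorExponents m r) : a 1 ≤ s ∨ m + 2 ≤ a 1 ∨ r ≤ a 2 := by
  induction s generalizing a with
  | zero => simp_all
  | succ s ih =>
    rw [succ_nsmul] at ha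
    obtain ⟨b, hb, t, ht, rfl⟩ := ha
    have hgap := ih hb
    obtain rfl | rfl | rfl | rfl | rfl := ht <;>
      simp only [Finsupp.add_apply, exponent_one, exponent_two] <;> lia

lemma exponent_mem_upperClosure_nsmul {S : Set (Fin 3 →₀ ℕ)} {a b c a' b' c' p q w k : ℕ}
    (h : exponent a b c ∈ S) (h' : exponent a' b' c' ∈ S)
    (hp : k * a + a' ≤ p) (hq : k * b + b' ≤ q) (hw : k * c + c' ≤ w) :
    exponent p q w ∈ upperClosure ((k + 1) • S) := by
  refine mem_upperClosure.mpr ⟨k • exponent a b c + exponent a' b' c', ?_, fun i => ?_⟩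
  · rw [succ_nsmul]
    exact Set.add_mem_add (Set.nsmul_mem_nsmul h) h'
  · fin_cases i
    exacts [hp, hq, hw]

lemma eq_span_X_zero_X_one_or_eq_span_X_zero_X_one_X_two {R : Type*} [CommSemiring R]
    {P : Ideal (MvPolynomial (Fin 3) R)}
    (hP : P = Ideal.span (X '' {i | X i ∈ P})) (hx : X 0 ∈ P) (hy : X 1 ∈ P) :
    P = Ideal.span {X 0, X 1} ∨ P = Ideal.span {X 0, X 1, X 2} := by
  by_cases hz : X 2 ∈ P
  · right
    have hvars : {i : Fin 3 | (X i : MvPolynomial (Fin 3) R) ∈ P} = {0, 1, 2} := by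
      ext i
      fin_cases i <;> simp [hx, hy, hz]
    rwa [hvars, Set.image_insert_eq, Set.image_pair] at hP
  · left
    have hvars : {i : Fin 3 | (X i : MvPolynomial (Fin 3) R) ∈ P} = {0, 1} := by
      ext i
      fin_cases i <;> simp [hx, hy, hz]
    rwa [hvars, Set.image_pair] at hP

variable {R : Type*} [CommRing R] [IsDomain R]

lemma isAssociatedPrime_span_X_zero_X_one (hs : 1 ≤ s) :
    IsAssociatedPrime (Ideal.span {(X 0 : MvPolynomial (Fin 3) R), X 1})
      (MvPolynomial (Fin 3) R ⧸ restrictSupportIdeal R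
        (upperClosure (s • generatorExponents m r)) (upperClosure _).upper) := by
  obtain ⟨k, rfl⟩ := Nat.exists_eq_add_of_le' hs
  have hY : exponent 0 (m + 3) 0 ∈ generatorExponents m r := by simp [generatorExponents]
  have hxY : exponent 1 (m + 2) 0 ∈ generatorExponents m r := by simp [generatorExponents]
  rw [← Set.image_pair X]
  refine isAssociatedPrime_span_X (a := exponent 0 ((m + 3) * k + (m + 2)) 0) ?_ ?_
  · rintro _ (rfl | rfl)
    · rw [single_zero_one, exponent_add]
      exact exponent_mem_upperClosure_nsmul hY hxY (by lia) (by lia) (by lia)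
    · rw [single_one_one, exponent_add]
      exact exponent_mem_upperClosure_nsmul hY hY (by lia) (by lia) (by lia)
  · rintro b hb hmem
    obtain ⟨c, hc, hle⟩ := mem_upperClosure.mp hmem
    have hcx : c 0 ≤ 0 := by simpa [hb] using hle 0
    have hcy : c 1 ≤ (m + 3) * k + (m + 2) := by simpa [hb] using hle 1
    have hdeg := add_eq_of_mem_nsmul_generatorExponents hc
    lia

lemma isAssociatedPrime_span_X_zero_X_one_X_two (hs : 1 ≤ s) (hsm : s ≤ m) (hr : 1 ≤ r) :
    IsAssociatedPrime (Ideal.span {(X 0 : MvPolynomial (Fin 3) R), X 1, X 2})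
      (MvPolynomial (Fin 3) R ⧸ restrictSupportIdeal R
        (upperClosure (s • generatorExponents m r)) (upperClosure _).upper) := by
  obtain ⟨k, rfl⟩ := Nat.exists_eq_add_of_le' hs
  have hX : exponent (m + 3) 0 0 ∈ generatorExponents m r := by simp [generatorExponents]
  have hXy : exponent (m + 2) 1 0 ∈ generatorExponents m r := by simp [generatorExponents]
  have hxY : exponent 1 (m + 2) 0 ∈ generatorExponents m r := by simp [generatorExponents]
  have hXyz : exponent (m + 1) 2 r ∈ generatorExponents m r := by simp [generatorExponents]
  rw [← Set.image_pair X, ← Set.image_insert_eq]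
  refine isAssociatedPrime_span_X (a := exponent ((m + 2) * k + (m + 1)) (m + 1) (r - 1)) ?_ ?_
  · rintro _ (rfl | rfl | rfl)
    · rw [single_zero_one, exponent_add]
      exact exponent_mem_upperClosure_nsmul hXy hXy (by lia) (by lia) (by lia)
    · rw [single_one_one, exponent_add]
      exact exponent_mem_upperClosure_nsmul hX hxY (by lia) (by lia) (by lia)
    · rw [single_two_one, exponent_add]
      exact exponent_mem_upperClosure_nsmul hXy hXyz (by lia) (by lia) (by lia)
  · rintro b hb hmem
    obtain ⟨c, hc, hle⟩ := mem_upperClosure.mp hmem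
    have hcx : c 0 ≤ (m + 2) * k + (m + 1) := by simpa [hb] using hle 0
    have hcy : c 1 ≤ m + 1 := by simpa [hb] using hle 1
    have hcz : c 2 ≤ r - 1 := by simpa [hb] using hle 2
    have hdeg := add_eq_of_mem_nsmul_generatorExponents hc
    have hgap := le_or_le_or_le_of_mem_nsmul_generatorExponents hc
    lia

end ThreeVariables

theorem stmt_1_general {R : Type*} [CommRing R] [IsDomain R] (m r : ℕ) (hr : 1 ≤ r)
    (I : Ideal (MvPolynomial (Fin 3) R))
    (hI : I = Ideal.span {X 0 ^ (m + 3), X 1 ^ (m + 3), X 0 ^ (m + 2) * X 1,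
      X 0 * X 1 ^ (m + 2), X 0 ^ (m + 1) * X 1 ^ 2 * X 2 ^ r}) :
    ∀ s : ℕ, 1 ≤ s → s ≤ m →
      associatedPrimes (MvPolynomial (Fin 3) R) (MvPolynomial (Fin 3) R ⧸ I ^ s) =
        {Ideal.span {X 0, X 1}, Ideal.span {X 0, X 1, X 2}} := by
  intro s hs hsm
  have hx : X 0 ^ (m + 3) ∈ I := hI ▸ Ideal.subset_span (by simp)
  have hy : X 1 ^ (m + 3) ∈ I := hI ▸ Ideal.subset_span (by simp)
  have hpow := span_monomial_pow (R := R) (generatorExponents m r) s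
  rw [span_monomial_generatorExponents, ← hI, span_monomial_eq_restrictSupportIdeal] at hpow
  ext P
  rw [AssociatedPrimes.mem_iff]
  constructor
  · intro hP
    have hle := le_of_isAssociatedPrime_quotient_pow hP
    rw [hpow] at hP
    exact eq_span_X_zero_X_one_or_eq_span_X_zero_X_one_X_two (eq_span_X_of_isAssociatedPrime hP)
      (hP.isPrime.mem_of_pow_mem _ (hle hx)) (hP.isPrime.mem_of_pow_mem _ (hle hy))
  · rw [hpow]
    rintro (rfl | rfl)
    · exact isAssociatedPrime_span_X_zero_X_one hs
    · exact isAssociatedPrime_span_X_zero_X_one_X_two hs hsm hr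

theorem stmt_1 {K : Type*} [Field K] (m r : ℕ) (hm : 1 ≤ m) (hr : 1 ≤ r)
    (I : Ideal (MvPolynomial (Fin 3) K))
    (hI : I = Ideal.span {X 0 ^ (m + 3), X 1 ^ (m + 3), X 0 ^ (m + 2) * X 1,
      X 0 * X 1 ^ (m + 2), X 0 ^ (m + 1) * X 1 ^ 2 * X 2 ^ r}) :
    ∀ s : ℕ, 1 ≤ s → s ≤ m →
      associatedPrimes (MvPolynomial (Fin 3) K) (MvPolynomial (Fin 3) K ⧸ I ^ s) =
        {Ideal.span {X 0, X 1}, Ideal.span {X 0, X 1, X 2}} := by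
  exact stmt_1_general m r hr I hI
end

section
/- Let K be a field, R = K[x,y,z], and let m, r ≥ 1 be integers. Let I = (x^{m+3}, y^{m+3}, x^{m+2}y, x y^{m+2}, x^{m+1} y^{2} z^{r}) ⊂ R. Then for every integer s ≥ m+1, Ass_R(R/I^s) = {(x,y)}. -/
open MvPolynomial

/-!
Put `P = (x, y)` and `J = (x ^ k, y ^ k) * P` with `k = m + 2`, so that `J ≤ I ≤ P ^ (k + 1)`. The
ideal `(x ^ k, y ^ k)` is a reduction of `P ^ k`: for `l ≥ k - 1`, every monomial of degree `k + l`
in `x` and `y` has an exponent at least `k`, so `P ^ (k + l) = (x ^ k, y ^ k) * P ^ l`. Iterating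
this with `l = s ≥ k - 1` gives `J ^ s = P ^ ((k + 1) * s)`, hence the same for `I ^ s`.
Finally, powers of an ideal generated by variables over a domain are primary, because the order of
vanishing along these variables is additive on products.
-/

section IdealPowers

variable {A : Type*} [CommSemiring A]

theorem ideal_pow_mul_pow_le_sup_pow (I J : Ideal A) (p q : ℕ) :
    I ^ p * J ^ q ≤ (I ⊔ J) ^ (p + q) := by
  rw [pow_add]
  exact Ideal.mul_mono (Ideal.pow_right_mono le_sup_left p) (Ideal.pow_right_mono le_sup_right q)

theorem ideal_sup_pow_add_eq_mul (I J : Ideal A) {k l : ℕ} (hkl : k ≤ l + 1) :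
    (I ⊔ J) ^ (k + l) = (I ^ k ⊔ J ^ k) * (I ⊔ J) ^ l := by
  apply le_antisymm
  · rw [← Ideal.add_eq_sup, add_pow, Ideal.sum_eq_sup, Ideal.add_eq_sup]
    refine Finset.sup_le fun p hp => Ideal.mul_le_left.trans ?_
    obtain ⟨q, hpq⟩ := Nat.exists_eq_add_of_le (Finset.mem_range_succ_iff.1 hp)
    rw [hpq, Nat.add_sub_cancel_left]
    obtain hkp | hkq : k ≤ p ∨ k ≤ q := by lia
    · obtain ⟨p, rfl⟩ := Nat.exists_eq_add_of_le hkp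
      obtain rfl : l = p + q := by lia
      rw [pow_add, mul_assoc]
      exact Ideal.mul_mono le_sup_left (ideal_pow_mul_pow_le_sup_pow I J p q)
    · obtain ⟨q, rfl⟩ := Nat.exists_eq_add_of_le hkq
      obtain rfl : l = p + q := by lia
      rw [pow_add, mul_left_comm]
      exact Ideal.mul_mono le_sup_right (ideal_pow_mul_pow_le_sup_pow I J p q)
  · rw [pow_add]
    exact Ideal.mul_mono_left
      (sup_le (Ideal.pow_right_mono le_sup_left k) (Ideal.pow_right_mono le_sup_right k))

theorem ideal_sup_pow_mul_add_eq_pow_mul (I J : Ideal A) {k l : ℕ} (hkl : k ≤ l + 1) (s : ℕ) :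
    (I ⊔ J) ^ (k * s + l) = (I ^ k ⊔ J ^ k) ^ s * (I ⊔ J) ^ l := by
  induction s with
  | zero => simp
  | succ s ih =>
    calc (I ⊔ J) ^ (k * (s + 1) + l)
        = (I ⊔ J) ^ (k + (k * s + l)) := by ring
      _ = (I ^ k ⊔ J ^ k) * (I ⊔ J) ^ (k * s + l) := ideal_sup_pow_add_eq_mul I J (by lia)
      _ = (I ^ k ⊔ J ^ k) ^ (s + 1) * (I ⊔ J) ^ l := by rw [ih, ← mul_assoc, ← pow_succ']

theorem ideal_pow_eq_sup_pow_of_le_of_le {I J L : Ideal A} {k s : ℕ} (hks : k ≤ s + 1)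
    (hle : (I ^ k ⊔ J ^ k) * (I ⊔ J) ≤ L) (hge : L ≤ (I ⊔ J) ^ (k + 1)) :
    L ^ s = (I ⊔ J) ^ ((k + 1) * s) := by
  apply le_antisymm
  · rw [pow_mul]
    exact Ideal.pow_right_mono hge s
  · calc (I ⊔ J) ^ ((k + 1) * s)
        = (I ⊔ J) ^ (k * s + s) := by ring
      _ = ((I ^ k ⊔ J ^ k) * (I ⊔ J)) ^ s := by
        rw [ideal_sup_pow_mul_add_eq_pow_mul I J hks, mul_pow]
      _ ≤ L ^ s := Ideal.pow_right_mono hle s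

theorem pow_mul_pow_mem_span_pair_pow (x y : A) (p q : ℕ) :
    x ^ p * y ^ q ∈ Ideal.span {x, y} ^ (p + q) := by
  rw [Ideal.span_insert]
  exact ideal_pow_mul_pow_le_sup_pow _ _ p q (Ideal.mul_mem_mul
    (Ideal.pow_mem_pow (Ideal.mem_span_singleton_self x) p)
    (Ideal.pow_mem_pow (Ideal.mem_span_singleton_self y) q))

theorem pow_eq_span_pair_pow_of_le_of_le {x y : A} {L : Ideal A} {k s : ℕ} (hks : k ≤ s + 1)
    (hle : Ideal.span {x ^ (k + 1), y ^ (k + 1), x ^ k * y, x * y ^ k} ≤ L)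
    (hge : L ≤ Ideal.span {x, y} ^ (k + 1)) :
    L ^ s = Ideal.span {x, y} ^ ((k + 1) * s) := by
  have hmul : Ideal.span {x ^ k, y ^ k} * Ideal.span {x, y} =
      Ideal.span {x ^ (k + 1), y ^ (k + 1), x ^ k * y, x * y ^ k} := by
    rw [Ideal.span_pair_mul_span_pair, ← pow_succ, ← pow_succ, mul_comm (y ^ k)]
    congr 1
    grind
  rw [← hmul, Ideal.span_insert, Ideal.span_insert, ← Ideal.span_singleton_pow,
    ← Ideal.span_singleton_pow] at hle
  rw [Ideal.span_insert] at hge ⊢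
  exact ideal_pow_eq_sup_pow_of_le_of_le hks hle hge

theorem span_le_span_pair_pow_add_three (x y c : A) (m : ℕ) :
    Ideal.span {x ^ (m + 3), y ^ (m + 3), x ^ (m + 2) * y, x * y ^ (m + 2),
      x ^ (m + 1) * y ^ 2 * c} ≤ Ideal.span {x, y} ^ (m + 3) := by
  rw [Ideal.span_le]
  rintro f (rfl | rfl | rfl | rfl | rfl)
  · simpa using pow_mul_pow_mem_span_pair_pow x y (m + 3) 0
  · simpa using pow_mul_pow_mem_span_pair_pow x y 0 (m + 3)
  · simpa using pow_mul_pow_mem_span_pair_pow x y (m + 2) 1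
  · simpa [add_comm 1] using pow_mul_pow_mem_span_pair_pow x y 1 (m + 2)
  · exact Ideal.mul_mem_right c _ (pow_mul_pow_mem_span_pair_pow x y (m + 1) 2)

end IdealPowers

section IdealsOfVariables

variable {σ R : Type*} [CommSemiring R]

theorem monomial_mem_span_X_image_pow_weight (S : Set σ) (d : σ →₀ ℕ) (a : R) :
    monomial d a ∈ Ideal.span (X '' S) ^ Finsupp.weight (S.indicator 1) d := by
  suffices hmonic : monomial d (1 : R) ∈
      Ideal.span (X '' S) ^ Finsupp.weight (S.indicator 1) d by
    simpa only [C_mul_monomial, mul_one] using Ideal.mul_mem_left _ (C a) hmonic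
  induction d using Finsupp.induction_linear with
  | zero => simp
  | add d e hd he =>
    rw [map_add, pow_add, ← mul_one (1 : R), ← monomial_mul]
    exact Ideal.mul_mem_mul hd he
  | single i k =>
    rw [← X_pow_eq_monomial, Finsupp.weight_single]
    by_cases hi : i ∈ S
    · simpa [hi] using Ideal.pow_mem_pow (Ideal.subset_span (Set.mem_image_of_mem X hi)) k
    · simp [hi]

theorem one_le_weightedOrder_of_mem_span_X_image {S : Set σ} {f : MvPolynomial σ R}
    (hf : f ∈ Ideal.span (X '' S)) :
    1 ≤ (f : MvPowerSeries σ R).weightedOrder (S.indicator 1) := by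
  refine MvPowerSeries.nat_le_weightedOrder (n := 1) _ fun d hd => ?_
  by_contra hcoeff
  rw [coeff_coe, ← ne_eq, ← mem_support_iff] at hcoeff
  obtain ⟨i, hi, hdi⟩ := mem_ideal_span_X_image.1 hf d hcoeff
  have hdi_le := Finsupp.le_weight (S.indicator (1 : σ → ℕ)) (s := i) (by simp [hi]) d
  lia

theorem le_weightedOrder_of_mem_span_X_image_pow {S : Set σ} {n : ℕ} {f : MvPolynomial σ R}
    (hf : f ∈ Ideal.span (X '' S) ^ n) :
    n ≤ (f : MvPowerSeries σ R).weightedOrder (S.indicator 1) := by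
  induction n generalizing f with
  | zero => simp
  | succ n ih =>
    rw [pow_succ] at hf
    induction hf using Submodule.mul_induction_on' with
    | mem_mul_mem p hp q hq =>
      rw [coe_mul, Nat.cast_succ]
      exact (add_le_add (ih hp) (one_le_weightedOrder_of_mem_span_X_image hq)).trans
        (MvPowerSeries.le_weightedOrder_mul _)
    | add p _ q _ hp hq =>
      rw [coe_add]
      exact (le_min hp hq).trans (MvPowerSeries.min_weightedOrder_le_add _)

theorem mem_span_X_image_pow_iff_le_weightedOrder {S : Set σ} {n : ℕ} {f : MvPolynomial σ R} :
    f ∈ Ideal.span (X '' S) ^ n ↔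
      n ≤ (f : MvPowerSeries σ R).weightedOrder (S.indicator 1) := by
  refine ⟨le_weightedOrder_of_mem_span_X_image_pow, fun hn => ?_⟩
  rw [f.as_sum]
  refine Ideal.sum_mem _ fun d hd => ?_
  have hnd : n ≤ Finsupp.weight (S.indicator 1) d := by
    rw [mem_support_iff, ← coeff_coe] at hd
    exact_mod_cast hn.trans (MvPowerSeries.weightedOrder_le _ hd)
  exact Ideal.pow_le_pow_right hnd (monomial_mem_span_X_image_pow_weight S d _)

theorem mem_span_X_image_iff_weightedOrder_ne_zero {S : Set σ} {f : MvPolynomial σ R} :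
    f ∈ Ideal.span (X '' S) ↔ (f : MvPowerSeries σ R).weightedOrder (S.indicator 1) ≠ 0 := by
  rw [← pow_one (Ideal.span _), mem_span_X_image_pow_iff_le_weightedOrder, Nat.cast_one,
    Order.one_le_iff_ne_zero]

variable [Nontrivial R] [NoZeroDivisors R]

theorem isPrime_span_X_image (S : Set σ) :
    (Ideal.span (X '' S) : Ideal (MvPolynomial σ R)).IsPrime := by
  rw [Ideal.isPrime_iff, Ideal.ne_top_iff_one]
  simp only [mem_span_X_image_iff_weightedOrder_ne_zero, coe_one, coe_mul,
    MvPowerSeries.weightedOrder_one, MvPowerSeries.weightedOrder_mul]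
  refine ⟨not_not.2 rfl, fun {f g} hfg => ?_⟩
  contrapose! hfg
  rw [hfg.1, hfg.2, add_zero]

theorem isPrimary_span_X_image_pow (S : Set σ) {n : ℕ} (hn : n ≠ 0) :
    (Ideal.span (X '' S) ^ n : Ideal (MvPolynomial σ R)).IsPrimary := by
  have hprime := isPrime_span_X_image (R := R) S
  rw [Ideal.isPrimary_iff, Ideal.radical_pow _ hn, hprime.radical]
  constructor
  · simpa [Ideal.pow_eq_top_iff, hn] using hprime.ne_top
  · intro f g hfg
    refine or_iff_not_imp_right.2 fun hg => ?_
    rw [mem_span_X_image_iff_weightedOrder_ne_zero, not_not] at hg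
    rwa [mem_span_X_image_pow_iff_le_weightedOrder, coe_mul, MvPowerSeries.weightedOrder_mul, hg,
      add_zero, ← mem_span_X_image_pow_iff_le_weightedOrder] at hfg

end IdealsOfVariables

/-- Mathlib takes the associated primes of a module to be the prime radicals of annihilators, so
the class of `1` already witnesses `Q.radical` over a ring that need not be Noetherian. -/
theorem associatedPrimes_quotient_eq_singleton_radical {A : Type*} [CommRing A] {Q : Ideal A}
    (hQ : Q.IsPrimary) : associatedPrimes A (A ⧸ Q) = {Q.radical} := by
  refine Set.eq_singleton_iff_unique_mem.2 ⟨⟨Ideal.isPrime_radical hQ, 1, ?_⟩,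
    fun J hJ => hJ.eq_radical hQ⟩
  congr 1
  ext a
  rw [Submodule.mem_colon_singleton, Submodule.mem_bot, Algebra.smul_def, mul_one,
    Ideal.Quotient.algebraMap_eq, Ideal.Quotient.eq_zero_iff_mem]

theorem stmt_2_general {σ R : Type*} [CommRing R] [IsDomain R] (i j : σ) {k s : ℕ} (hs : s ≠ 0)
    (hks : k ≤ s + 1) {I : Ideal (MvPolynomial σ R)}
    (hle : Ideal.span {X i ^ (k + 1), X j ^ (k + 1), X i ^ k * X j, X i * X j ^ k} ≤ I)
    (hge : I ≤ Ideal.span {X i, X j} ^ (k + 1)) :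
    associatedPrimes (MvPolynomial σ R) (MvPolynomial σ R ⧸ I ^ s) = {Ideal.span {X i, X j}} := by
  have hpow : I ^ s = Ideal.span (X '' {i, j}) ^ ((k + 1) * s) := by
    rw [Set.image_pair]
    exact pow_eq_span_pair_pow_of_le_of_le hks hle hge
  have hexp : (k + 1) * s ≠ 0 := mul_ne_zero k.succ_ne_zero hs
  rw [hpow, associatedPrimes_quotient_eq_singleton_radical (isPrimary_span_X_image_pow _ hexp),
    Ideal.radical_pow _ hexp, (isPrime_span_X_image _).radical, Set.image_pair]

theorem stmt_2 {K : Type*} [Field K] (m r : ℕ) (hm : 1 ≤ m) (hr : 1 ≤ r)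
    (I : Ideal (MvPolynomial (Fin 3) K))
    (hI : I = Ideal.span {X 0 ^ (m + 3), X 1 ^ (m + 3), X 0 ^ (m + 2) * X 1,
      X 0 * X 1 ^ (m + 2), X 0 ^ (m + 1) * X 1 ^ 2 * X 2 ^ r}) :
    ∀ s : ℕ, m + 1 ≤ s →
      associatedPrimes (MvPolynomial (Fin 3) K) (MvPolynomial (Fin 3) K ⧸ I ^ s) =
        {Ideal.span {X 0, X 1}} := by
  intro s hs
  subst hI
  exact stmt_2_general 0 1 (k := m + 2) (by lia) (by lia) (Ideal.span_mono (by grind))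
    (span_le_span_pair_pow_add_three (X 0) (X 1) (X 2 ^ r) m)
end

section
/- Let K be a field, R = K[x,y,z], and let m, r ≥ 1 be integers. Then the ideal I = (x^{m+3}, y^{m+3}, x^{m+2}y, x y^{m+2}, x^{m+1} y^{2} z^{r}) satisfies the equality of ideals I = (x, y^{m+3}) ∩ (x^{m+3}, y) ∩ (x^{m+1}, y^{m+2}) ∩ (x^{m+2}, y^{2}) ∩ (x^{m+2}, y^{m+2}, z^{r}). -/
open MvPolynomial

/-!
A polynomial lies in a monomial ideal iff each of its exponent vectors dominates the exponent
vector of a generator, so the identity can be checked on exponents `(a, b, c)`. Setting `z = 1`,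
the generators form a staircase in the `(a, b)`-plane, and the first four components are its
inner corners. The last component then removes exactly the points with `c < r` that lie above no
step other than `(m + 1, 2)`.
-/

section MonomialIdeal

variable {σ R : Type*} [Fintype σ] [CommSemiring R]

variable (R) in
/-- The monomial ideal of `R[X i : i ∈ σ]` generated by the monomials with exponents in `S`.
As `σ` is finite, exponents are plain functions, so that `Fin n`-indexed ones can be written
as `![a, b, …]`. -/
noncomputable def monomialIdeal (S : Set (σ → ℕ)) : Ideal (MvPolynomial σ R) :=
  Ideal.span ((fun e => ∏ i, X i ^ e i) '' S)

theorem mem_monomialIdeal_iff {S : Set (σ → ℕ)} {p : MvPolynomial σ R} :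
    p ∈ monomialIdeal R S ↔ ∀ d ∈ p.support, ∃ e ∈ S, e ≤ d := by
  have prod_eq_monomial : (fun e : σ → ℕ => (∏ i, X i ^ e i : MvPolynomial σ R)) =
      (fun d => monomial d 1) ∘ Finsupp.equivFunOnFinite.symm := by
    funext e
    simp [monomial_eq, Finsupp.prod_fintype]
  rw [monomialIdeal, prod_eq_monomial, Set.image_comp, mem_ideal_span_monomial_image]
  exact forall₂_congr fun _ _ => Set.exists_mem_image

end MonomialIdeal

theorem staircase_iff_corners (m a b : ℕ) :
    (m + 3 ≤ a ∨ m + 3 ≤ b ∨ m + 2 ≤ a ∧ 1 ≤ b ∨ 1 ≤ a ∧ m + 2 ≤ b ∨ m + 1 ≤ a ∧ 2 ≤ b) ↔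
      (1 ≤ a ∨ m + 3 ≤ b) ∧ (m + 3 ≤ a ∨ 1 ≤ b) ∧ (m + 1 ≤ a ∨ m + 2 ≤ b) ∧
        (m + 2 ≤ a ∨ 2 ≤ b) := by
  omega

theorem truncated_staircase_iff_corners (m r a b c : ℕ) :
    (m + 3 ≤ a ∨ m + 3 ≤ b ∨ m + 2 ≤ a ∧ 1 ≤ b ∨ 1 ≤ a ∧ m + 2 ≤ b ∨
        m + 1 ≤ a ∧ 2 ≤ b ∧ r ≤ c) ↔
      ((1 ≤ a ∨ m + 3 ≤ b) ∧ (m + 3 ≤ a ∨ 1 ≤ b) ∧ (m + 1 ≤ a ∨ m + 2 ≤ b) ∧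
        (m + 2 ≤ a ∨ 2 ≤ b)) ∧ (m + 2 ≤ a ∨ m + 2 ≤ b ∨ r ≤ c) := by
  rw [← staircase_iff_corners]
  omega

theorem monomialIdeal_staircase_eq_inf (R : Type*) [CommSemiring R] (m r : ℕ) :
    monomialIdeal R {![m + 3, 0, 0], ![0, m + 3, 0], ![m + 2, 1, 0], ![1, m + 2, 0],
        ![m + 1, 2, r]} =
      monomialIdeal R {![1, 0, 0], ![0, m + 3, 0]} ⊓
        monomialIdeal R {![m + 3, 0, 0], ![0, 1, 0]} ⊓
        monomialIdeal R {![m + 1, 0, 0], ![0, m + 2, 0]} ⊓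
        monomialIdeal R {![m + 2, 0, 0], ![0, 2, 0]} ⊓
        monomialIdeal R {![m + 2, 0, 0], ![0, m + 2, 0], ![0, 0, r]} := by
  ext p
  simp only [Ideal.mem_inf, mem_monomialIdeal_iff, ← forall_and]
  refine forall₂_congr fun d _ => ?_
  simpa [and_assoc, Pi.le_def, Fin.forall_fin_succ] using
    truncated_staircase_iff_corners m r (d 0) (d 1) (d 2)

theorem stmt_3_general {R : Type*} [CommSemiring R] (m r : ℕ) :
    (Ideal.span {X 0 ^ (m + 3), X 1 ^ (m + 3), X 0 ^ (m + 2) * X 1,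
        X 0 * X 1 ^ (m + 2), X 0 ^ (m + 1) * X 1 ^ 2 * X 2 ^ r} :
      Ideal (MvPolynomial (Fin 3) R)) =
      Ideal.span {X 0, X 1 ^ (m + 3)} ⊓ Ideal.span {X 0 ^ (m + 3), X 1} ⊓
        Ideal.span {X 0 ^ (m + 1), X 1 ^ (m + 2)} ⊓ Ideal.span {X 0 ^ (m + 2), X 1 ^ 2} ⊓
        Ideal.span {X 0 ^ (m + 2), X 1 ^ (m + 2), X 2 ^ r} := by
  simpa [monomialIdeal, Set.image_insert_eq, Fin.prod_univ_three] using
    monomialIdeal_staircase_eq_inf R m r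

theorem stmt_3 {K : Type*} [Field K] (m r : ℕ) (hm : 1 ≤ m) (hr : 1 ≤ r) :
    (Ideal.span {X 0 ^ (m + 3), X 1 ^ (m + 3), X 0 ^ (m + 2) * X 1,
        X 0 * X 1 ^ (m + 2), X 0 ^ (m + 1) * X 1 ^ 2 * X 2 ^ r} :
      Ideal (MvPolynomial (Fin 3) K)) =
      Ideal.span {X 0, X 1 ^ (m + 3)} ⊓ Ideal.span {X 0 ^ (m + 3), X 1} ⊓
        Ideal.span {X 0 ^ (m + 1), X 1 ^ (m + 2)} ⊓ Ideal.span {X 0 ^ (m + 2), X 1 ^ 2} ⊓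
        Ideal.span {X 0 ^ (m + 2), X 1 ^ (m + 2), X 2 ^ r} :=
  stmt_3_general m r
end

section
/- Let K be a field, R = K[x_1,…,x_n], and let I and J be monomial ideals of R. Given positive integers w_1,…,w_n, let h : R → R be the K-algebra homomorphism with h(x_i) = x_i^{w_i}, and for an ideal A let A_W denote the ideal generated by h(A). Then (I :_R J)_W = (I_W :_R J_W). -/
/-!
For positive weights, the substitution `x_i ↦ x_i ^ w_i` makes the polynomial ring a projective
(in fact free) module over itself: dividing exponents by the weights with remainder writes each
polynomial as `∑ x^ρ h(p_ρ)`. Formation of colon ideals commutes with projective extension of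
scalars `A → B`, for arbitrary ideals: an `A`-linear form `φ : B → A` maps `I B` into `I`, so if
`x J ⊆ I B`, then `φ(x) J ⊆ I`, and `x` is a combination of such coordinates `φ(x)`.
-/

open MvPolynomial

section Colon

variable {A B : Type*} [CommSemiring A] [CommSemiring B]

theorem map_colon_le_colon_image (f : A →+* B) (I : Ideal A) (S : Set A) :
    (I.colon S).map f ≤ (I.map f).colon (f '' S) := by
  rw [Ideal.map_le_iff_le_comap]
  intro a ha
  rw [Ideal.mem_comap, Submodule.mem_colon, Set.forall_mem_image]
  intro s hs
  rw [smul_eq_mul, ← map_mul]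
  exact Ideal.mem_map_of_mem f (Submodule.mem_colon.1 ha s hs)

theorem linearMap_apply_mem_of_mem_map_algebraMap [Algebra A B] {I : Ideal A} (φ : B →ₗ[A] A)
    {x : B} (hx : x ∈ I.map (algebraMap A B)) : φ x ∈ I := by
  have hx' : x ∈ I • (⊤ : Submodule A B) := by rwa [Ideal.smul_top_eq_map]
  simpa using Submodule.smul_top_le_comap_smul_top I φ hx'

theorem map_algebraMap_colon_of_projective [Algebra A B] [Module.Projective A B]
    (I : Ideal A) (S : Set A) :
    (I.colon S).map (algebraMap A B) = (I.map (algebraMap A B)).colon (algebraMap A B '' S) := by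
  refine le_antisymm (map_colon_le_colon_image _ I S) fun x hx => ?_
  obtain ⟨c, hc⟩ := Module.projective_def.1 (inferInstance : Module.Projective A B)
  have coord_mem_colon (b : B) : c x b ∈ I.colon S := by
    refine Submodule.mem_colon.2 fun s hs => ?_
    have hsx : s • x ∈ I.map (algebraMap A B) := by
      rw [Algebra.smul_def, mul_comm]
      exact Submodule.mem_colon.1 hx _ (Set.mem_image_of_mem _ hs)
    simpa [mul_comm] using
      linearMap_apply_mem_of_mem_map_algebraMap (Finsupp.lapply b ∘ₗ c) hsx
  rw [← hc x, Finsupp.linearCombination_apply]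
  refine sum_mem fun b _ => ?_
  simp only [Algebra.smul_def]
  exact Ideal.mul_mem_right _ _ (Ideal.mem_map_of_mem _ (coord_mem_colon b))

/-- A ring homomorphism `A →+* B` is projective if it turns `B` into a projective `A`-module. As
with `RingHom.Flat`, this allows `A` and `B` to be the same ring, with `B` carrying a module
structure other than multiplication. -/
def IsProjectiveRingHom (f : A →+* B) : Prop :=
  letI := f.toAlgebra
  Module.Projective A B

theorem IsProjectiveRingHom.of_dualBasis {ι : Type*} {f : A →+* B} (b : ι → B)
    (c : B →+ ι →₀ A) (map_mul_eq_smul : ∀ a x, c (f a * x) = a • c x)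
    (sum_eq : ∀ x, ((c x).sum fun i a => f a * b i) = x) : IsProjectiveRingHom f := by
  let := f.toAlgebra
  let coords : B →ₗ[A] ι →₀ A := { c with map_smul' := map_mul_eq_smul }
  exact Module.Projective.of_split coords (Finsupp.linearCombination A b) (LinearMap.ext sum_eq)

theorem IsProjectiveRingHom.map_colon {f : A →+* B} (hf : IsProjectiveRingHom f) (I J : Ideal A) :
    (I.colon J).map f = (I.map f).colon (J.map f) := by
  let := f.toAlgebra
  have : Module.Projective A B := hf
  exact (map_algebraMap_colon_of_projective I (J : Set A)).trans Ideal.colon_span.symm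

end Colon

section Weight

variable {σ : Type*}

/-- The quotient of the exponent `d` by the weights `w`, coordinate by coordinate; the remainder is
`d - w • exponentDiv w d`. -/
noncomputable def exponentDiv (w : σ → ℕ) (d : σ →₀ ℕ) : σ →₀ ℕ :=
  Finsupp.onFinset d.support (fun i => d i / w i) fun i hi => by
    rw [Finsupp.mem_support_iff]
    exact fun h => hi (by rw [h, Nat.zero_div])

@[simp]
theorem exponentDiv_apply (w : σ → ℕ) (d : σ →₀ ℕ) (i : σ) : exponentDiv w d i = d i / w i := rfl

theorem smul_exponentDiv_le (w : σ → ℕ) (d : σ →₀ ℕ) : w • exponentDiv w d ≤ d :=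
  fun i => Nat.mul_div_le (d i) (w i)

theorem exponentDiv_smul_add {w : σ → ℕ} (hw : ∀ i, 1 ≤ w i) (d e : σ →₀ ℕ) :
    exponentDiv w (w • d + e) = d + exponentDiv w e := by
  ext i
  simp [Nat.mul_add_div (hw i)]

variable {K : Type*} [CommSemiring K]

theorem aeval_X_pow_monomial (w : σ → ℕ) (d : σ →₀ ℕ) (r : K) :
    aeval (fun i => (X i : MvPolynomial σ K) ^ w i) (monomial d r) = monomial (w • d) r := by
  have support_smul_subset : (w • d).support ⊆ d.support := fun i => by simp
  rw [aeval_monomial, algebraMap_eq, monomial_eq,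
    Finsupp.prod_of_support_subset _ support_smul_subset _ fun _ _ => pow_zero _]
  simp [Finsupp.prod, pow_mul]

/-- The coordinates of a polynomial with respect to the monomials `x^ρ` in the decomposition
`p = ∑ x^ρ h(p_ρ)`, where `h` is the substitution `x_i ↦ x_i ^ w_i` and `ρ` runs over the
remainders modulo `w`. -/
noncomputable def weightCoords (w : σ → ℕ) :
    MvPolynomial σ K →ₗ[K] (σ →₀ ℕ) →₀ MvPolynomial σ K :=
  (basisMonomials σ K).constr K fun d =>
    Finsupp.single (d - w • exponentDiv w d) (monomial (exponentDiv w d) 1)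

theorem weightCoords_monomial (w : σ → ℕ) (d : σ →₀ ℕ) (r : K) :
    weightCoords w (monomial d r) =
      Finsupp.single (d - w • exponentDiv w d) (monomial (exponentDiv w d) r) := by
  have monomial_eq_smul : monomial d r = r • basisMonomials σ K d := by simp [smul_monomial]
  rw [monomial_eq_smul, map_smul, weightCoords, Module.Basis.constr_basis, Finsupp.smul_single,
    smul_monomial, smul_eq_mul, mul_one]

theorem weightCoords_aeval_X_pow_mul {w : σ → ℕ} (hw : ∀ i, 1 ≤ w i) (p q : MvPolynomial σ K) :
    weightCoords w (aeval (fun i => (X i : MvPolynomial σ K) ^ w i) p * q) =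
      p • weightCoords w q := by
  induction p using MvPolynomial.induction_on' with
  | add p₁ p₂ h₁ h₂ => rw [map_add, add_mul, map_add, h₁, h₂, add_smul]
  | monomial d r =>
    induction q using MvPolynomial.induction_on' with
    | add q₁ q₂ h₁ h₂ => rw [mul_add, map_add, h₁, h₂, map_add, smul_add]
    | monomial e s =>
      rw [aeval_X_pow_monomial, monomial_mul, weightCoords_monomial, weightCoords_monomial,
        exponentDiv_smul_add hw, smul_add, add_tsub_add_eq_tsub_left, Finsupp.smul_single,
        smul_eq_mul, monomial_mul]

theorem sum_weightCoords (w : σ → ℕ) (p : MvPolynomial σ K) :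
    ((weightCoords w p).sum fun ρ q =>
      aeval (fun i => (X i : MvPolynomial σ K) ^ w i) q * monomial ρ 1) = p := by
  induction p using MvPolynomial.induction_on' with
  | add p₁ p₂ h₁ h₂ =>
    rw [map_add, Finsupp.sum_add_index' (by simp) (by simp [add_mul]), h₁, h₂]
  | monomial d r =>
    rw [weightCoords_monomial, Finsupp.sum_single_index (by simp), aeval_X_pow_monomial,
      monomial_mul, mul_one, add_tsub_cancel_of_le (smul_exponentDiv_le w d)]

theorem isProjectiveRingHom_aeval_X_pow {w : σ → ℕ} (hw : ∀ i, 1 ≤ w i) :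
    IsProjectiveRingHom
      (aeval fun i => (X i : MvPolynomial σ K) ^ w i :
        MvPolynomial σ K →ₐ[K] MvPolynomial σ K).toRingHom :=
  .of_dualBasis (fun ρ => monomial ρ 1) (weightCoords w).toAddMonoidHom
    (weightCoords_aeval_X_pow_mul hw) (sum_weightCoords w)

end Weight

theorem stmt_4_general {σ K : Type*} [CommSemiring K] (I J : Ideal (MvPolynomial σ K))
    (w : σ → ℕ) (hw : ∀ i, 1 ≤ w i) :
    Ideal.map (aeval fun i => (X i : MvPolynomial σ K) ^ w i) (I.colon J) =
      (Ideal.map (aeval fun i => (X i : MvPolynomial σ K) ^ w i) I).colon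
        (Ideal.map (aeval fun i => (X i : MvPolynomial σ K) ^ w i) J) :=
  (isProjectiveRingHom_aeval_X_pow hw).map_colon I J

theorem stmt_4 {K : Type*} [Field K] {n : ℕ} (I J : Ideal (MvPolynomial (Fin n) K))
    (hI : IsMonomialIdeal I) (hJ : IsMonomialIdeal J)
    (w : Fin n → ℕ) (hw : ∀ i, 1 ≤ w i) :
    Ideal.map (aeval fun i => (X i : MvPolynomial (Fin n) K) ^ w i) (I.colon J) =
      (Ideal.map (aeval fun i => (X i : MvPolynomial (Fin n) K) ^ w i) I).colon
        (Ideal.map (aeval fun i => (X i : MvPolynomial (Fin n) K) ^ w i) J) :=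
  stmt_4_general I J w hw
end

section
/- Let K be a field, R = K[x_1,…,x_n], let I ⊂ R be a monomial ideal, and let ℓ0 ≥ 1 be an integer. Given positive integers w_1,…,w_n, let h : R → R be the K-algebra homomorphism with h(x_i) = x_i^{w_i}, and let I_W be the ideal generated by h(I). Then ℓ0 is the strong persistence index of I if and only if ℓ0 is the strong persistence index of I_W. -/
open MvPolynomial

/-- `l` is the strong persistence index of `I`: `l` is the smallest positive integer such that
`(I^(k+1) : I) = I^k` for all `k ≥ l`. -/
def IsStrongPersistenceIndex {R : Type*} [CommRing R] (I : Ideal R) (l : ℕ) : Prop :=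
  0 < l ∧ (∀ k, l ≤ k → (I ^ (k + 1)).colon I = I ^ k) ∧
    ∀ l', 0 < l' → (∀ k, l' ≤ k → (I ^ (k + 1)).colon I = I ^ k) → l ≤ l'

/-!
If `S` is a free `R`-algebra with basis `b`, then an element of `S` lies in the extension of an
ideal `A` of `R` exactly when all its coordinates lie in `A`. Multiplication by elements of `R` acts
coordinatewise, so extension to `S` commutes with colon ideals, and it is injective when `b` is
nonempty; it also commutes with powers. Hence the equality `(I ^ (k + 1) : I) = I ^ k` holds
for `I` if and only if it holds for the extension of `I`.

The substitution `x_i ↦ x_i ^ w i` makes the polynomial ring a free module over itself: by division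
with remainder in each exponent, every monomial is uniquely `h(x ^ d) * x ^ r` with `r i < w i`, so
these `x ^ r` form a basis.
-/

section FreeAlgebra

variable {R S ι : Type*} [CommSemiring R] [CommSemiring S] [Algebra R S]

theorem mem_map_algebraMap_iff_forall_repr_mem (b : Module.Basis ι R S) {A : Ideal R} {x : S} :
    x ∈ A.map (algebraMap R S) ↔ ∀ i, b.repr x i ∈ A := by
  rw [← Submodule.restrictScalars_mem R, ← Ideal.smul_top_eq_map]
  constructor
  · intro hx i
    induction hx using Submodule.smul_induction_on' with
    | smul a ha s _ => simpa using A.mul_mem_right _ ha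
    | add x _ y _ hx hy => simpa using A.add_mem hx hy
  · intro hx
    rw [← b.linearCombination_repr x]
    exact Submodule.sum_mem _ fun i _ => Submodule.smul_mem_smul (hx i) Submodule.mem_top

theorem smul_basis_mem_map_algebraMap_iff (b : Module.Basis ι R S) {A : Ideal R} {a : R} (i : ι) :
    a • b i ∈ A.map (algebraMap R S) ↔ a ∈ A := by
  classical
  rw [mem_map_algebraMap_iff_forall_repr_mem b]
  simp only [map_smul, b.repr_self, Finsupp.smul_single, smul_eq_mul, mul_one,
    Finsupp.single_apply]
  exact ⟨fun h => by simpa using h i, fun ha j => by split_ifs <;> simp [ha]⟩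

theorem map_algebraMap_injective_of_basis [Nonempty ι] (b : Module.Basis ι R S) :
    Function.Injective (Ideal.map (algebraMap R S)) := by
  intro A B hAB
  obtain ⟨i⟩ := ‹Nonempty ι›
  ext a
  rw [← smul_basis_mem_map_algebraMap_iff b i, hAB, smul_basis_mem_map_algebraMap_iff b i]

theorem map_algebraMap_colon_of_basis (b : Module.Basis ι R S) (A I : Ideal R) :
    (A.colon I).map (algebraMap R S) =
      (A.map (algebraMap R S)).colon (I.map (algebraMap R S)) := by
  ext x
  calc x ∈ (A.colon I).map (algebraMap R S)
    _ ↔ ∀ i, ∀ a ∈ I, b.repr x i * a ∈ A := by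
      simp only [mem_map_algebraMap_iff_forall_repr_mem b, Submodule.mem_colon, SetLike.mem_coe,
        smul_eq_mul]
    _ ↔ ∀ a ∈ I, ∀ i, b.repr (a • x) i ∈ A := by
      simp only [map_smul, Finsupp.smul_apply, smul_eq_mul, mul_comm]
      exact ⟨fun h a ha i => h i a ha, fun h i a ha => h a ha i⟩
    _ ↔ ∀ a ∈ I, x * algebraMap R S a ∈ A.map (algebraMap R S) := by
      simp only [mem_map_algebraMap_iff_forall_repr_mem b, Algebra.smul_def, mul_comm]
    _ ↔ x ∈ (A.map (algebraMap R S)).colon (I.map (algebraMap R S)) := by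
      rw [Ideal.map.eq_def _ I, Ideal.colon_span]
      simp only [Submodule.mem_colon, Set.forall_mem_image, SetLike.mem_coe, smul_eq_mul]

end FreeAlgebra

theorem isStrongPersistenceIndex_map_algebraMap_iff {R S ι : Type*} [CommRing R] [CommRing S]
    [Algebra R S] [Nonempty ι] (b : Module.Basis ι R S) (I : Ideal R) (l : ℕ) :
    IsStrongPersistenceIndex (I.map (algebraMap R S)) l ↔ IsStrongPersistenceIndex I l := by
  simp only [IsStrongPersistenceIndex, ← Ideal.map_pow, ← map_algebraMap_colon_of_basis b,
    (map_algebraMap_injective_of_basis b).eq_iff]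

section AddMonoidAlgebra

open AddMonoidAlgebra

variable (K : Type*) {M N T : Type*} [CommSemiring K] [AddCommMonoid M] [AddCommMonoid N]
  (φ : M →+ N) (r : T → N)

theorem bijective_linearCombination_single
    (h : Function.Bijective fun p : T × M => r p.1 + φ p.2) :
    letI := (mapDomainRingHom K φ).toAlgebra
    Function.Bijective (Finsupp.linearCombination (AddMonoidAlgebra K M)
      fun t => (single (r t) 1 : AddMonoidAlgebra K N)) := by
  let := (mapDomainRingHom K φ).toAlgebra
  let e : (T →₀ AddMonoidAlgebra K M) ≃+ AddMonoidAlgebra K N :=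
    (Finsupp.mapRange.addEquiv coeffAddEquiv).trans <| Finsupp.curryAddEquiv.symm.trans <|
      (Finsupp.domCongr (Equiv.ofBijective _ h)).trans coeffAddEquiv.symm
  have linearCombination_eq : (Finsupp.linearCombination (AddMonoidAlgebra K M)
      fun t => (single (r t) 1 : AddMonoidAlgebra K N)).toAddMonoidHom = e.toAddMonoidHom := by
    ext t m c : 4
    simp [e, Algebra.smul_def, RingHom.algebraMap_toAlgebra, single_mul_single,
      Finsupp.curryAddEquiv, Finsupp.curryEquiv, add_comm]
  convert! e.bijective
  exact congrArg DFunLike.coe linearCombination_eq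

/-- If every element of `N` is uniquely of the form `r t + φ m`, then the monomials with exponents
`r t` form a basis of `K[N]` as a module over `K[M]`, which acts through `φ`. -/
noncomputable def mapDomainBasis (h : Function.Bijective fun p : T × M => r p.1 + φ p.2) :
    letI := (mapDomainRingHom K φ).toAlgebra
    Module.Basis T (AddMonoidAlgebra K M) (AddMonoidAlgebra K N) :=
  letI := (mapDomainRingHom K φ).toAlgebra
  .ofRepr (LinearEquiv.ofBijective _ (bijective_linearCombination_single K φ r h)).symm

end AddMonoidAlgebra

theorem isStrongPersistenceIndex_map_mapDomainRingHom_iff {K M N T : Type*} [CommRing K]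
    [AddCommMonoid M] [AddCommMonoid N] [Nonempty T] {φ : M →+ N} {r : T → N}
    (h : Function.Bijective fun p : T × M => r p.1 + φ p.2)
    (I : Ideal (AddMonoidAlgebra K M)) (l : ℕ) :
    IsStrongPersistenceIndex (I.map (AddMonoidAlgebra.mapDomainRingHom K φ)) l ↔
      IsStrongPersistenceIndex I l :=
  let := (AddMonoidAlgebra.mapDomainRingHom K φ).toAlgebra
  isStrongPersistenceIndex_map_algebraMap_iff (mapDomainBasis K φ r h) I l

section Weight

variable {σ : Type*} {w : σ → ℕ}

theorem bijective_residue_add_weight_smul (hw : ∀ i, 1 ≤ w i) :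
    Function.Bijective fun p : {r : σ →₀ ℕ // ∀ i, r i < w i} × (σ →₀ ℕ) =>
      p.1.1 + w • p.2 := by
  constructor
  · rintro ⟨⟨r, hr⟩, d⟩ ⟨⟨s, hs⟩, e⟩ h
    have add_mul_eq (i : σ) : r i + w i * d i = s i + w i * e i := by
      simpa using DFunLike.congr_fun h i
    have div_mod_eq (i : σ) := (Nat.div_mod_unique (hw i)).2 ⟨add_mul_eq i, hr i⟩
    have div_mod_eq' (i : σ) := (Nat.div_mod_unique (d := e i) (hw i)).2 ⟨rfl, hs i⟩
    have hrs : r = s := Finsupp.ext fun i => (div_mod_eq i).2.symm.trans (div_mod_eq' i).2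
    have hde : d = e := Finsupp.ext fun i => (div_mod_eq i).1.symm.trans (div_mod_eq' i).1
    simp only [hrs, hde]
  · intro e
    let residue : σ →₀ ℕ := .onFinset e.support (fun i => e i % w i) (by aesop)
    let quotient : σ →₀ ℕ := .onFinset e.support (fun i => e i / w i) (by aesop)
    refine ⟨(⟨residue, fun i => Nat.mod_lt _ (hw i)⟩, quotient), Finsupp.ext fun i => ?_⟩
    exact Nat.mod_add_div (e i) (w i)

theorem aeval_X_pow_eq_mapDomainAlgHom (K : Type*) [CommSemiring K] (w : σ → ℕ) :
    (aeval fun i => (X i : MvPolynomial σ K) ^ w i) =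
      AddMonoidAlgebra.mapDomainAlgHom K K (DistribSMul.toAddMonoidHom (σ →₀ ℕ) w) := by
  refine algHom_ext fun i => ?_
  have weight_smul_single : w • Finsupp.single i 1 = Finsupp.single i (w i) := by
    ext j
    by_cases h : j = i <;> simp [h]
  rw [aeval_X, X_pow_eq_monomial]
  simp [X, monomial, weight_smul_single]

end Weight

theorem stmt_5_general {K σ : Type*} [CommRing K] (I : Ideal (MvPolynomial σ K)) (l : ℕ)
    (w : σ → ℕ) (hw : ∀ i, 1 ≤ w i) :
    IsStrongPersistenceIndex I l ↔
      IsStrongPersistenceIndex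
        (Ideal.map (aeval fun i => (X i : MvPolynomial σ K) ^ w i) I) l := by
  have : Nonempty {r : σ →₀ ℕ // ∀ i, r i < w i} := ⟨0, hw⟩
  rw [aeval_X_pow_eq_mapDomainAlgHom]
  exact (isStrongPersistenceIndex_map_mapDomainRingHom_iff
    (bijective_residue_add_weight_smul hw) I l).symm

theorem stmt_5 {K : Type*} [Field K] {n : ℕ} (I : Ideal (MvPolynomial (Fin n) K))
    (hI : IsMonomialIdeal I) (l0 : ℕ) (hl0 : 1 ≤ l0)
    (w : Fin n → ℕ) (hw : ∀ i, 1 ≤ w i) :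
    IsStrongPersistenceIndex I l0 ↔
      IsStrongPersistenceIndex
        (Ideal.map (aeval fun i => (X i : MvPolynomial (Fin n) K) ^ w i) I) l0 :=
  stmt_5_general I l0 w hw
end

section
/- Let K be a field, R = K[x_1,…,x_n], let I and J be monomial ideals of R, and let S ⊆ {1,…,n}. Let π_S : K[x_1,…,x_n] → K[x_i : i ∈ S] be the K-algebra homomorphism with π_S(x_i) = x_i for i ∈ S and π_S(x_j) = 1 for j ∉ S, and for an ideal A of R let A(p) denote the ideal of K[x_i : i ∈ S] generated by π_S(A). Then (I :_R J)(p) = (I(p) :_{K[x_i : i ∈ S]} J(p)). -/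
open MvPolynomial

/-- The monomial localization map `π_S : K[x_1,…,x_n] → K[x_i : i ∈ S]` sending
`x_i ↦ x_i` for `i ∈ S` and `x_j ↦ 1` for `j ∉ S`. -/
noncomputable def monLocMap (K : Type*) [Field K] {n : ℕ} (S : Finset (Fin n)) :
    MvPolynomial (Fin n) K →ₐ[K] MvPolynomial {i // i ∈ S} K :=
  aeval fun i => if h : i ∈ S then X ⟨i, h⟩ else 1

/-!
Monomial localization `f` has a section `g`, the inclusion of the smaller polynomial ring, and every
monomial `m` is `u * g (f m)` with `f u = 1`, where `u` collects the variables outside `S`. Hence an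
element `q` lies in the image of a monomial ideal `I` iff `u * g q ∈ I` for some `u` with `f u = 1`.
If `q` lies in the colon of the images of `I` and `J`, each of finitely many generators of `J`
provides such a `u`, and the product of these multiplies `g q` into `I.colon J`, while `f` sends it
to `1`.
-/

theorem map_colon_le {R A F : Type*} [Semiring R] [Semiring A] [FunLike F R A] [RingHomClass F R A]
    (f : F) (I : Ideal R) (s : Set R) :
    Ideal.map f (I.colon s) ≤ (Ideal.map f I).colon (f '' s) := by
  refine Ideal.map_le_iff_le_comap.2 fun r hr => Submodule.mem_colon.2 ?_
  rintro _ ⟨x, hx, rfl⟩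
  rw [smul_eq_mul, ← map_mul]
  exact Ideal.mem_map_of_mem f (Submodule.mem_colon.1 hr x hx)

section Retraction

variable {R A F G : Type*} [CommSemiring R] [CommSemiring A]
variable [FunLike F R A] [RingHomClass F R A] [FunLike G A R] [RingHomClass G A R]

theorem exists_mul_mem_colon (U : Submonoid R) {I : Ideal R} {t : Finset R} {r : R}
    (h : ∀ x ∈ t, ∃ u ∈ U, u * r * x ∈ I) : ∃ u ∈ U, u * r ∈ I.colon (t : Set R) := by
  choose! u hu hmem using h
  refine ⟨∏ x ∈ t, u x, prod_mem hu, Submodule.mem_colon.2 fun x hx => ?_⟩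
  have hdvd : u x * r * x ∣ (∏ x ∈ t, u x) * r * x :=
    mul_dvd_mul_right (mul_dvd_mul_right (Finset.dvd_prod_of_mem u hx) r) x
  exact I.mem_of_dvd hdvd (hmem x hx)

/-- The elements `x` that agree with `g (f x)` up to a factor sent to `1` by `f`. For `f` the
monomial localization and `g` its section, the monomials are such elements. -/
def retractionSubmonoid (f : F) (g : G) : Submonoid R where
  carrier := {x | ∃ u ∈ MonoidHom.mker f, x = u * g (f x)}
  one_mem' := ⟨1, one_mem _, by simp⟩
  mul_mem' := by
    rintro x y ⟨u, hu, hx⟩ ⟨v, hv, hy⟩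
    refine ⟨u * v, mul_mem hu hv, ?_⟩
    calc x * y = u * g (f x) * (v * g (f y)) := by rw [← hx, ← hy]
      _ = u * v * g (f (x * y)) := by rw [map_mul, map_mul, mul_mul_mul_comm]

theorem mem_retractionSubmonoid {f : F} {g : G} {x : R} :
    x ∈ retractionSubmonoid f g ↔ ∃ u ∈ MonoidHom.mker f, x = u * g (f x) :=
  Iff.rfl

variable {f : F} {g : G} {s : Set R}

theorem exists_mul_mem_span_of_mem_map_span (hs : s ⊆ retractionSubmonoid f g) {q : A}
    (hq : q ∈ Ideal.map f (Ideal.span s)) : ∃ u ∈ MonoidHom.mker f, u * g q ∈ Ideal.span s := by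
  rw [Ideal.map_span] at hq
  induction hq using Submodule.span_induction with
  | mem _ h =>
    obtain ⟨x, hx, rfl⟩ := h
    obtain ⟨u, hu, hxu⟩ := hs hx
    exact ⟨u, hu, hxu ▸ Ideal.subset_span hx⟩
  | zero => exact ⟨1, one_mem _, by simp⟩
  | add a b _ _ ha hb =>
    obtain ⟨u, hu, hua⟩ := ha
    obtain ⟨v, hv, hvb⟩ := hb
    refine ⟨u * v, mul_mem hu hv, ?_⟩
    have hsum : u * v * g (a + b) = v * (u * g a) + u * (v * g b) := by rw [map_add]; ring
    exact hsum ▸ add_mem (Ideal.mul_mem_left _ v hua) (Ideal.mul_mem_left _ u hvb)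
  | smul a b _ hb =>
    obtain ⟨u, hu, hub⟩ := hb
    refine ⟨u, hu, ?_⟩
    rw [smul_eq_mul, map_mul, mul_left_comm]
    exact Ideal.mul_mem_left _ (g a) hub

theorem map_colon_finset (hfg : Function.LeftInverse f g) (hs : s ⊆ retractionSubmonoid f g)
    {t : Finset R} (ht : (t : Set R) ⊆ retractionSubmonoid f g) :
    Ideal.map f ((Ideal.span s).colon t) = (Ideal.map f (Ideal.span s)).colon (f '' t) := by
  refine le_antisymm (map_colon_le f _ _) fun q hq => ?_
  have hgen : ∀ x ∈ t, ∃ u ∈ MonoidHom.mker f, u * g q * x ∈ Ideal.span s := by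
    intro x hx
    obtain ⟨v, -, hxv⟩ := mem_retractionSubmonoid.1 (ht hx)
    have hqx : q * f x ∈ Ideal.map f (Ideal.span s) :=
      Submodule.mem_colon.1 hq _ (Set.mem_image_of_mem f hx)
    obtain ⟨u, hu, hmem⟩ := exists_mul_mem_span_of_mem_map_span hs hqx
    have hmul : u * g q * x = v * (u * g (q * f x)) := by
      calc u * g q * x = u * g q * (v * g (f x)) := by rw [← hxv]
        _ = v * (u * g (q * f x)) := by rw [map_mul]; ring
    exact ⟨u, hu, hmul ▸ Ideal.mul_mem_left _ v hmem⟩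
  obtain ⟨u, hu, hmem⟩ := exists_mul_mem_colon _ hgen
  have hfu : f (u * g q) = q := by rw [map_mul, MonoidHom.mem_mker.1 hu, one_mul, hfg q]
  exact hfu ▸ Ideal.mem_map_of_mem f hmem

theorem map_colon_span (hfg : Function.LeftInverse f g) (hs : s ⊆ retractionSubmonoid f g)
    {t : Set R} (ht : t ⊆ retractionSubmonoid f g) (hfin : (Ideal.span t).FG) :
    Ideal.map f ((Ideal.span s).colon (Ideal.span t)) =
      (Ideal.map f (Ideal.span s)).colon (Ideal.map f (Ideal.span t)) := by
  obtain ⟨t', ht', hspan : Ideal.span t = Ideal.span t'⟩ :=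
    (Submodule.fg_span_iff_fg_span_finset_subset t).1 hfin
  rw [hspan, Ideal.map_span f t', Ideal.colon_span, Ideal.colon_span]
  exact map_colon_finset hfg hs (ht'.trans ht)

end Retraction

section MonomialLocalization

variable (K : Type*) {σ : Type*} [CommSemiring K] (p : σ → Prop) [DecidablePred p]

/-- Monomial localization `K[x_i] → K[x_i : p i]` over an arbitrary coefficient semiring and in
arbitrarily many variables: the variables outside `p` are set to `1`. -/
noncomputable def monomialLocalization : MvPolynomial σ K →ₐ[K] MvPolynomial {i // p i} K :=
  aeval fun i => if h : p i then X ⟨i, h⟩ else 1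

theorem leftInverse_monomialLocalization_rename :
    Function.LeftInverse (monomialLocalization K p) (rename (R := K) (Subtype.val (p := p))) := by
  intro q
  rw [monomialLocalization, aeval_rename]
  simp [Function.comp_def, Subtype.prop]

theorem X_mem_retractionSubmonoid (i : σ) :
    X i ∈ retractionSubmonoid (monomialLocalization K p)
      (rename (R := K) (Subtype.val (p := p))) := by
  by_cases hi : p i
  · exact ⟨1, one_mem _, by simp [monomialLocalization, hi]⟩
  · exact ⟨X i, by simp [MonoidHom.mem_mker, monomialLocalization, hi],
      by simp [monomialLocalization, hi]⟩

theorem monomial_mem_retractionSubmonoid (d : σ →₀ ℕ) :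
    monomial d 1 ∈ retractionSubmonoid (monomialLocalization K p)
      (rename (R := K) (Subtype.val (p := p))) := by
  rw [monomial_eq, C_1, one_mul]
  exact prod_mem fun i _ => pow_mem (X_mem_retractionSubmonoid K p i) (d i)

variable {K}

theorem stmt_6_general {I J : Ideal (MvPolynomial σ K)}
    (hI : ∃ s : Set (σ →₀ ℕ), I = Ideal.span ((fun d => monomial d (1 : K)) '' s))
    (hJ : ∃ t : Set (σ →₀ ℕ), J = Ideal.span ((fun d => monomial d (1 : K)) '' t))
    (hfin : J.FG) :
    Ideal.map (monomialLocalization K p) (I.colon J) =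
      (Ideal.map (monomialLocalization K p) I).colon
        (Ideal.map (monomialLocalization K p) J) := by
  obtain ⟨s, rfl⟩ := hI
  obtain ⟨t, rfl⟩ := hJ
  have hmon (u : Set (σ →₀ ℕ)) : (fun d => monomial d (1 : K)) '' u ⊆
      retractionSubmonoid (monomialLocalization K p) (rename (R := K) (Subtype.val (p := p))) :=
    Set.image_subset_iff.2 fun d _ => monomial_mem_retractionSubmonoid K p d
  exact map_colon_span (leftInverse_monomialLocalization_rename K p) (hmon s) (hmon t) hfin

end MonomialLocalization

theorem stmt_6 {K : Type*} [Field K] {n : ℕ} (I J : Ideal (MvPolynomial (Fin n) K))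
    (hI : IsMonomialIdeal I) (hJ : IsMonomialIdeal J) (S : Finset (Fin n)) :
    Ideal.map (monLocMap K S) (I.colon J) =
      (Ideal.map (monLocMap K S) I).colon (Ideal.map (monLocMap K S) J) :=
  stmt_6_general (· ∈ S) hI hJ (IsNoetherian.noetherian J)
end

section
/- Let K be a field, S = K[x_1,x_2,x_3], and let m, r ≥ 1 be integers. Let L = (x_1^{m+3}, x_2^{m+3}, x_1^{m+2}x_2, x_1 x_2^{m+2}, x_1^{m+1} x_2^{2} x_3^{r}) ⊂ S. Then for every integer s with 2 ≤ s ≤ m+1, the monomial u = x_1^{m+1} x_2^{(s-1)(m+1)+s-2} satisfies u ∈ (L^s :_S L) and u ∉ L^{s-1}; in particular (L^s :_S L) ≠ L^{s-1}. -/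
open MvPolynomial

/-!
Put `n = m + 1` and `u = x₁ ^ n * x₂ ^ ((s - 1) * (n + 1) - 1)`; in terms of `q = s - 2` the second
exponent is `(q + 1) * n + q`. Let `I` be the ideal generated by the first four generators of `L`,
so that `I ≤ L ≤ I + (x₁ ^ n * x₂ ^ 2 * x₃)`.

As `s ≤ n`, the product of `u` with each of the four generators of `I`, and with `x₁ ^ n * x₂ ^ 2`,
is divisible by a product of `s` generators of `I`. Hence `u * L ≤ I ^ s ≤ L ^ s`.

On the other hand `L ≤ (x₁ ^ (n + 1), x₃) + (x₂ ^ (n + 1))`, so that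
`L ^ (s - 1) ≤ (x₁ ^ (n + 1), x₃) + (x₂ ^ ((s - 1) * (n + 1)))`. The exponents of `u` in `x₁` and
`x₂` are both one too small for `u` to lie in this monomial ideal.
-/

section Ideal

variable {R : Type*} [CommSemiring R]

lemma sup_pow_le_sup_pow_right (I J : Ideal R) (t : ℕ) : (I ⊔ J) ^ t ≤ I ⊔ J ^ t := by
  induction t with
  | zero => simp
  | succ t ih =>
    calc (I ⊔ J) ^ (t + 1) ≤ (I ⊔ J ^ t) * (I ⊔ J) := pow_succ (I ⊔ J) t ▸ Ideal.mul_mono_left ih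
      _ = I * (I ⊔ J) ⊔ (J ^ t * I ⊔ J ^ t * J) := by rw [Ideal.sup_mul, Ideal.mul_sup (J ^ t)]
      _ ≤ I ⊔ J ^ (t + 1) :=
        sup_le (Ideal.mul_le_left.trans le_sup_left)
          (sup_le_sup Ideal.mul_le_right (pow_succ J t).ge)

lemma mul_mul_mem_pow_succ {I : Ideal R} {p q : R} {t : ℕ} (hp : p ∈ I ^ t) (hq : q ∈ I) (c : R) :
    p * q * c ∈ I ^ (t + 1) :=
  Ideal.mul_mem_right c _ (pow_succ I t ▸ Ideal.mul_mem_mul hp hq)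

end Ideal

section Monomial

variable {σ R : Type*} [CommSemiring R] [Nontrivial R]

lemma monomial_one_mem_span_monomial_image_iff {e : σ →₀ ℕ} {s : Set (σ →₀ ℕ)} :
    monomial e (1 : R) ∈ Ideal.span ((fun d => monomial d (1 : R)) '' s) ↔ ∃ d ∈ s, d ≤ e := by
  classical
  simp [mem_ideal_span_monomial_image, support_monomial]

lemma X_pow_mul_X_pow_notMem_span {i j k : σ} (hij : i ≠ j) (hik : i ≠ k) (hjk : j ≠ k)
    {a b c d : ℕ} (ha : a < c) (hb : b < d) :
    (X i ^ a * X j ^ b : MvPolynomial σ R) ∉ Ideal.span {X i ^ c, X k} ⊔ Ideal.span {X j ^ d} := by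
  have hspan : (Ideal.span {X i ^ c, X k} ⊔ Ideal.span {X j ^ d} : Ideal (MvPolynomial σ R)) =
      Ideal.span ((fun e => monomial e (1 : R)) ''
        ({.single i c, .single k 1} ∪ {.single j d})) := by
    simp only [Set.image_union, Set.image_pair, Set.image_singleton, Ideal.span_union,
      X_pow_eq_monomial]
    rfl
  have hmonomial : (X i ^ a * X j ^ b : MvPolynomial σ R) =
      monomial (.single i a + .single j b) 1 := by
    simp only [X_pow_eq_monomial, monomial_mul, one_mul]
  rw [hspan, hmonomial, monomial_one_mem_span_monomial_image_iff]
  rintro ⟨e, (rfl | rfl) | rfl, hle⟩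
  · have hca : c ≤ a := by simpa [hij] using hle i
    omega
  · simpa [hik, hjk] using hle k
  · have hdb : d ≤ b := by simpa [hij] using hle j
    omega

end Monomial

/-- The ideal generated by the two outermost monomials at either end of degree `n + 2` in `x` and
`y`. With `n = m + 1` these are the generators of `L` that do not involve the third variable. -/
def outerIdeal {R : Type*} [CommSemiring R] (x y : R) (n : ℕ) : Ideal R :=
  Ideal.span {x ^ (n + 2), y ^ (n + 2), x ^ (n + 1) * y, x * y ^ (n + 1)}

namespace outerIdeal

section Semiring

variable {R : Type*} [CommSemiring R] (x y : R) (n : ℕ)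

lemma span_eq_sup (w : R) :
    Ideal.span {x ^ (n + 2), y ^ (n + 2), x ^ (n + 1) * y, x * y ^ (n + 1), w} =
      outerIdeal x y n ⊔ Ideal.span {w} := by
  simp only [outerIdeal, ← Ideal.span_union, Set.insert_union, Set.singleton_union]

lemma left_pow_mem : x ^ (n + 2) ∈ outerIdeal x y n := Ideal.subset_span (by simp)

lemma right_pow_mem : y ^ (n + 2) ∈ outerIdeal x y n := Ideal.subset_span (by simp)

lemma left_pow_mul_mem : x ^ (n + 1) * y ∈ outerIdeal x y n := Ideal.subset_span (by simp)

lemma mul_right_pow_mem : x * y ^ (n + 1) ∈ outerIdeal x y n := Ideal.subset_span (by simp)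

lemma colon_outerIdeal (J : Ideal R) : J.colon (outerIdeal x y n) =
    J.colon {x ^ (n + 2), y ^ (n + 2), x ^ (n + 1) * y, x * y ^ (n + 1)} :=
  Ideal.colon_span

variable {n}

lemma mem_colon_outerIdeal {q : ℕ} (hq : q + 2 ≤ n) :
    x ^ n * y ^ ((q + 1) * n + q) ∈ (outerIdeal x y n ^ (q + 2)).colon (outerIdeal x y n) := by
  obtain ⟨e, rfl⟩ := Nat.exists_eq_add_of_le hq
  have hx := left_pow_mem x y (q + 2 + e)
  have hy := right_pow_mem x y (q + 2 + e)
  have hxy := left_pow_mul_mem x y (q + 2 + e)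
  have hyx := mul_right_pow_mem x y (q + 2 + e)
  rw [colon_outerIdeal, Submodule.mem_colon]
  rintro p (rfl | rfl | rfl | rfl) <;> rw [smul_eq_mul]
  · convert mul_mul_mem_pow_succ (mul_mul_mem_pow_succ (Ideal.pow_mem_pow hy q) hxy 1) hxy (y ^ e)
      using 1
    ring
  · convert mul_mul_mem_pow_succ (Ideal.pow_mem_pow hyx (q + 1)) hyx (x ^ e) using 1
    ring
  · convert mul_mul_mem_pow_succ (Ideal.pow_mem_pow hyx (q + 1)) hx (x ^ e) using 1
    ring
  · convert mul_mul_mem_pow_succ (Ideal.pow_mem_pow hy (q + 1)) hxy (y ^ e) using 1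
    ring

lemma mul_left_pow_mul_sq_mem_pow {q : ℕ} (hq : q + 2 ≤ n) :
    x ^ n * y ^ ((q + 1) * n + q) * (x ^ n * y ^ 2) ∈ outerIdeal x y n ^ (q + 2) := by
  obtain ⟨e, rfl⟩ := Nat.exists_eq_add_of_le hq
  convert mul_mul_mem_pow_succ (Ideal.pow_mem_pow (mul_right_pow_mem x y (q + 2 + e)) (q + 1))
    (left_pow_mul_mem x y (q + 2 + e)) (x ^ e) using 1
  ring

variable {x y}

lemma mem_colon_pow_of_le {z : R} {L : Ideal R} (hIL : outerIdeal x y n ≤ L)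
    (hLI : L ≤ outerIdeal x y n ⊔ Ideal.span {x ^ n * y ^ 2 * z}) {q : ℕ} (hq : q + 2 ≤ n) :
    x ^ n * y ^ ((q + 1) * n + q) ∈ (L ^ (q + 2)).colon L := by
  rw [Submodule.mem_colon]
  intro p hp
  obtain ⟨a, ha, b, hb, rfl⟩ := Submodule.mem_sup.mp (hLI hp)
  obtain ⟨c, rfl⟩ := Ideal.mem_span_singleton.mp hb
  refine Ideal.pow_right_mono hIL _ ?_
  rw [smul_add]
  refine add_mem (Submodule.mem_colon.mp (mem_colon_outerIdeal x y hq) a ha) ?_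
  rw [smul_eq_mul, mul_assoc _ z, ← mul_assoc]
  exact Ideal.mul_mem_right _ _ (mul_left_pow_mul_sq_mem_pow x y hq)

lemma sup_span_le (z : R) : outerIdeal x y n ⊔ Ideal.span {x ^ n * y ^ 2 * z} ≤
    Ideal.span {x ^ (n + 1), z} ⊔ Ideal.span {y ^ (n + 1)} := by
  set J := Ideal.span {x ^ (n + 1), z} ⊔ Ideal.span {y ^ (n + 1)}
  have hx : x ^ (n + 1) ∈ J := Ideal.mem_sup_left (Ideal.subset_span (by simp))
  have hy : y ^ (n + 1) ∈ J := Ideal.mem_sup_right (Ideal.subset_span (by simp))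
  have hz : z ∈ J := Ideal.mem_sup_left (Ideal.subset_span (by simp))
  rw [← span_eq_sup, Ideal.span_le]
  rintro p (rfl | rfl | rfl | rfl | rfl)
  · exact Ideal.pow_mem_of_pow_mem _ hx (by omega)
  · exact Ideal.pow_mem_of_pow_mem _ hy (by omega)
  · exact J.mul_mem_right _ hx
  · exact J.mul_mem_left _ hy
  · exact J.mul_mem_left _ hz

end Semiring

lemma notMem_pow_of_le {σ R : Type*} [CommSemiring R] [Nontrivial R] {i j k : σ}
    (hij : i ≠ j) (hik : i ≠ k) (hjk : j ≠ k) {n : ℕ} {L : Ideal (MvPolynomial σ R)}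
    (hL : L ≤ outerIdeal (X i) (X j) n ⊔ Ideal.span {X i ^ n * X j ^ 2 * X k}) (q : ℕ) :
    X i ^ n * X j ^ ((q + 1) * n + q) ∉ L ^ (q + 1) := by
  intro hu
  have hmem := sup_pow_le_sup_pow_right _ _ _
    (Ideal.pow_right_mono (hL.trans (sup_span_le (X k))) (q + 1) hu)
  rw [Ideal.span_singleton_pow, ← pow_mul] at hmem
  have hexp : (q + 1) * n + q < (n + 1) * (q + 1) := by linarith
  exact X_pow_mul_X_pow_notMem_span hij hik hjk n.lt_succ_self hexp hmem

end outerIdeal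

theorem stmt_10_general {σ R : Type*} [CommSemiring R] [Nontrivial R] {i j k : σ}
    (hij : i ≠ j) (hik : i ≠ k) (hjk : j ≠ k) (m : ℕ) (L : Ideal (MvPolynomial σ R))
    (hIL : outerIdeal (X i) (X j) (m + 1) ≤ L)
    (hLI : L ≤ outerIdeal (X i) (X j) (m + 1) ⊔ Ideal.span {X i ^ (m + 1) * X j ^ 2 * X k}) :
    ∀ s : ℕ, 2 ≤ s → s ≤ m + 1 →
      (X i ^ (m + 1) * X j ^ ((s - 1) * (m + 1) + s - 2) ∈ (L ^ s).colon L ∧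
        X i ^ (m + 1) * X j ^ ((s - 1) * (m + 1) + s - 2) ∉ L ^ (s - 1)) ∧
      (L ^ s).colon L ≠ L ^ (s - 1) := by
  intro s hs hsm
  obtain ⟨q, rfl⟩ := Nat.exists_eq_add_of_le' hs
  have hmem := outerIdeal.mem_colon_pow_of_le hIL hLI hsm
  have hnotMem := outerIdeal.notMem_pow_of_le hij hik hjk hLI q
  exact ⟨⟨hmem, hnotMem⟩, ne_of_mem_of_not_mem' hmem hnotMem⟩

theorem stmt_10 {K : Type*} [Field K] (m r : ℕ) (hm : 1 ≤ m) (hr : 1 ≤ r)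
    (L : Ideal (MvPolynomial (Fin 3) K))
    (hL : L = Ideal.span {X 0 ^ (m + 3), X 1 ^ (m + 3), X 0 ^ (m + 2) * X 1,
      X 0 * X 1 ^ (m + 2), X 0 ^ (m + 1) * X 1 ^ 2 * X 2 ^ r}) :
    ∀ s : ℕ, 2 ≤ s → s ≤ m + 1 →
      ((X 0 : MvPolynomial (Fin 3) K) ^ (m + 1) * X 1 ^ ((s - 1) * (m + 1) + s - 2) ∈
          (L ^ s).colon L ∧
        (X 0 : MvPolynomial (Fin 3) K) ^ (m + 1) * X 1 ^ ((s - 1) * (m + 1) + s - 2) ∉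
          L ^ (s - 1)) ∧
      (L ^ s).colon L ≠ L ^ (s - 1) := by
  have hsup := hL.trans (outerIdeal.span_eq_sup (X 0) (X 1) (m + 1) _)
  exact stmt_10_general (by decide) (by decide) (by decide) m L (hsup ▸ le_sup_left)
    (hsup.trans_le (sup_le_sup_left (Ideal.span_singleton_le_span_singleton.mpr
      (mul_dvd_mul_left _ (dvd_pow_self _ (by omega)))) _))
end

section
/- Let K be a field, T = K[x_1,x_2], and let m ≥ 1 be an integer. Let J = (x_1^{m+3}, x_2^{m+3}, x_1^{m+2}x_2, x_1 x_2^{m+2}, x_1^{m+1} x_2^{2}) ⊂ T. Then for every integer s ≥ m+2, (J^s :_T x_1^{m+3}) ⊆ J^{s-1}, and consequently (J^s :_T J) = J^{s-1}. -/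
open MvPolynomial

/-! Write `I = (x₁, x₂)`, `d = m + 3` and `F = (x₁ ^ (d - 1), x₂ ^ (d - 1))`, so that
`F * I ≤ J ≤ I ^ d`. By the pigeonhole principle `F * I ^ k = I ^ (d - 1 + k)` as soon as
`d - 2 ≤ k`. Iterating, `F ^ t * I ^ t = I ^ (d * t)`, and hence `J ^ t = I ^ (d * t)`, for all
`t ≥ d - 2 = m + 1`. For such powers the colon ideals can be read off from degrees:
`(I ^ (d * t + d) : x₁ ^ d) = I ^ (d * t)`. -/

/- The hypothesis says `card ι * (n - 1) < e.degree` without truncated subtraction. -/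
theorem exists_le_apply_of_card_mul_lt_degree_add_card {ι : Type*} [Fintype ι] {n : ℕ}
    {e : ι →₀ ℕ} (h : Fintype.card ι * n < e.degree + Fintype.card ι) : ∃ i, n ≤ e i := by
  by_contra! hlt
  have hsum : ∑ i, (e i + 1) ≤ ∑ _i : ι, n := Finset.sum_le_sum fun i _ => hlt i
  rw [Finset.sum_add_distrib, ← Finsupp.degree_eq_sum, Finset.sum_const, Finset.sum_const,
    Finset.card_univ, smul_eq_mul, smul_eq_mul, mul_one] at hsum
  omega

section PowersOfGenerators

variable {ι A : Type*} [CommSemiring A]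

theorem span_range_pow_eq_span_finsuppProd (f : ι → A) (n : ℕ) :
    Ideal.span (Set.range f) ^ n =
      Ideal.span ((fun e : ι →₀ ℕ => e.prod (f · ^ ·)) '' {e | e.degree = n}) := by
  rw [Ideal.span, Submodule.span_pow, ← Set.image_univ, Finsupp.image_pow_eq_finsuppProd_image]
  simp only [Set.subset_univ, and_true]

variable [Fintype ι]

theorem span_range_pow_mul_pow_span_range (f : ι → A) {n k : ℕ}
    (h : Fintype.card ι * n < n + k + Fintype.card ι) :
    Ideal.span (Set.range fun i => f i ^ n) * Ideal.span (Set.range f) ^ k =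
      Ideal.span (Set.range f) ^ (n + k) := by
  apply le_antisymm
  · rw [pow_add]
    refine Ideal.mul_mono_left (Ideal.span_le.2 ?_)
    rintro _ ⟨i, rfl⟩
    exact Ideal.pow_mem_pow (Ideal.subset_span (Set.mem_range_self i)) n
  · rw [span_range_pow_eq_span_finsuppProd f (n + k), span_range_pow_eq_span_finsuppProd f k,
      Ideal.span_le]
    rintro _ ⟨e, he : e.degree = n + k, rfl⟩
    obtain ⟨i, hi⟩ : ∃ i, n ≤ e i := exists_le_apply_of_card_mul_lt_degree_add_card (by omega)
    obtain ⟨e', rfl⟩ : ∃ e', e = Finsupp.single i n + e' :=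
      exists_add_of_le (Finsupp.single_le_iff.2 hi)
    have he' : e'.degree = k := by
      rw [map_add, Finsupp.degree_single] at he
      exact Nat.add_left_cancel he
    have hprod : (Finsupp.single i n + e').prod (f · ^ ·) = f i ^ n * e'.prod (f · ^ ·) := by
      rw [Finsupp.prod_add_index' (fun _ => pow_zero _) (fun _ _ _ => pow_add _ _ _),
        Finsupp.prod_single_index (h := (f · ^ ·)) (pow_zero _)]
    simp only [SetLike.mem_coe, hprod]
    exact Ideal.mul_mem_mul (Ideal.subset_span ⟨i, rfl⟩) (Ideal.subset_span ⟨e', he', rfl⟩)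

theorem pow_span_range_pow_mul_pow_span_range (f : ι → A) {n k : ℕ}
    (h : Fintype.card ι * n < n + k + Fintype.card ι) (t : ℕ) :
    Ideal.span (Set.range fun i => f i ^ n) ^ t * Ideal.span (Set.range f) ^ k =
      Ideal.span (Set.range f) ^ (n * t + k) := by
  induction t with
  | zero => simp
  | succ t ih =>
    rw [pow_succ', mul_assoc, ih, span_range_pow_mul_pow_span_range f (by omega)]
    ring_nf

theorem pow_eq_pow_span_range_of_le_of_le {f : ι → A} {J : Ideal A} {n k t : ℕ}
    (hle : Ideal.span (Set.range fun i => f i ^ n) * Ideal.span (Set.range f) ^ k ≤ J)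
    (hJ : J ≤ Ideal.span (Set.range f) ^ (n + k))
    (h : Fintype.card ι * n < n + k * t + Fintype.card ι) :
    J ^ t = Ideal.span (Set.range f) ^ ((n + k) * t) := by
  apply le_antisymm
  · rw [pow_mul]
    exact Ideal.pow_right_mono hJ t
  · rw [add_mul, ← pow_span_range_pow_mul_pow_span_range f h, pow_mul, ← mul_pow]
    exact Ideal.pow_right_mono hle t

end PowersOfGenerators

theorem pow_le_colon_pow_succ {A : Type*} [CommSemiring A] (J : Ideal A) (t : ℕ) :
    J ^ t ≤ (J ^ (t + 1)).colon J :=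
  fun _ hf => Submodule.mem_colon.2 fun _ hg => Ideal.mul_mem_mul hf hg

section PolynomialRing

variable {σ R : Type*} [CommSemiring R]

theorem colon_monomial_pow_idealOfVars (e : σ →₀ ℕ) (n : ℕ) :
    (idealOfVars σ R ^ (n + e.degree)).colon (Ideal.span {monomial e (1 : R)}) =
      idealOfVars σ R ^ n := by
  ext p
  rw [Ideal.mem_colon_span_singleton]
  refine ⟨fun hp => ?_, fun hp => ?_⟩
  · rw [mem_pow_idealOfVars_iff'] at hp ⊢
    intro d hd
    rw [← hp (d + e) (by rwa [map_add, add_lt_add_iff_right]), coeff_mul_monomial, mul_one]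
  · rw [pow_add]
    exact Ideal.mul_mem_mul hp
      ((mem_pow_idealOfVars_iff _ _).2 fun d hd => by
        rw [Finset.mem_singleton.1 (support_monomial_subset hd)])

theorem X_pow_mul_X_pow_mem_pow_idealOfVars (i j : σ) (a b : ℕ) :
    (X i ^ a * X j ^ b : MvPolynomial σ R) ∈ idealOfVars σ R ^ (a + b) := by
  have X_mem (l : σ) : X l ∈ idealOfVars σ R := Ideal.subset_span (Set.mem_range_self l)
  rw [pow_add]
  exact Ideal.mul_mem_mul (Ideal.pow_mem_pow (X_mem i) a) (Ideal.pow_mem_pow (X_mem j) b)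

theorem stmt_12_general [Fintype σ] (i : σ) {J : Ideal (MvPolynomial σ R)} {n k t : ℕ}
    (hle : Ideal.span (Set.range fun j => X j ^ n) * idealOfVars σ R ^ k ≤ J)
    (hJ : J ≤ idealOfVars σ R ^ (n + k))
    (ht : Fintype.card σ * n < n + k * t + Fintype.card σ) :
    (J ^ (t + 1)).colon (Ideal.span {(X i : MvPolynomial σ R) ^ (n + k)}) = J ^ t ∧
      (J ^ (t + 1)).colon J = J ^ t := by
  have hX : X i ^ (n + k) ∈ J := by
    rw [pow_add]
    exact hle (Ideal.mul_mem_mul (Ideal.subset_span (Set.mem_range_self i))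
      (Ideal.pow_mem_pow (Ideal.subset_span (Set.mem_range_self i)) k))
  have hcolon : (J ^ (t + 1)).colon (Ideal.span {(X i : MvPolynomial σ R) ^ (n + k)}) = J ^ t := by
    have ht' : Fintype.card σ * n < n + k * (t + 1) + Fintype.card σ := by
      rw [mul_add_one]
      omega
    rw [pow_eq_pow_span_range_of_le_of_le hle hJ ht, pow_eq_pow_span_range_of_le_of_le hle hJ ht',
      mul_add_one, X_pow_eq_monomial]
    simpa only [Finsupp.degree_single] using
      colon_monomial_pow_idealOfVars (Finsupp.single i (n + k)) ((n + k) * t)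
  refine ⟨hcolon, le_antisymm ?_ (pow_le_colon_pow_succ J t)⟩
  exact (Submodule.colon_mono le_rfl ((Ideal.span_singleton_le_iff_mem J).2 hX)).trans_eq hcolon

end PolynomialRing

section TwoVariables

variable (R : Type*) [CommSemiring R]

theorem span_range_X_pow_mul_idealOfVars_fin_two (n : ℕ) :
    Ideal.span (Set.range fun i : Fin 2 => (X i : MvPolynomial (Fin 2) R) ^ n) *
        idealOfVars (Fin 2) R =
      Ideal.span {X 0 ^ (n + 1), X 0 ^ n * X 1, X 0 * X 1 ^ n, X 1 ^ (n + 1)} := by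
  have range_eq (f : Fin 2 → MvPolynomial (Fin 2) R) : Set.range f = {f 0, f 1} := by
    ext p
    simp [eq_comm]
  rw [idealOfVars, range_eq, range_eq, Ideal.span_pair_mul_span_pair, mul_comm (X 1 ^ n) (X 0),
    pow_succ, pow_succ]

theorem span_le_pow_idealOfVars_fin_two (m : ℕ) :
    Ideal.span {X 0 ^ (m + 3), X 1 ^ (m + 3), X 0 ^ (m + 2) * X 1, X 0 * X 1 ^ (m + 2),
      X 0 ^ (m + 1) * X 1 ^ 2} ≤ idealOfVars (Fin 2) R ^ (m + 3) := by
  have mem {a b : ℕ} (h : a + b = m + 3) :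
      (X 0 ^ a * X 1 ^ b : MvPolynomial (Fin 2) R) ∈ idealOfVars (Fin 2) R ^ (m + 3) :=
    h ▸ X_pow_mul_X_pow_mem_pow_idealOfVars 0 1 a b
  rw [Ideal.span_le]
  rintro _ (rfl | rfl | rfl | rfl | rfl)
  · simpa using mem (add_zero (m + 3))
  · simpa using mem (zero_add (m + 3))
  · simpa using mem (a := m + 2) (b := 1) rfl
  · simpa using mem (add_comm 1 (m + 2))
  · exact mem rfl

end TwoVariables

theorem stmt_12 {K : Type*} [Field K] (m : ℕ) (hm : 1 ≤ m)
    (J : Ideal (MvPolynomial (Fin 2) K))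
    (hJ : J = Ideal.span {X 0 ^ (m + 3), X 1 ^ (m + 3), X 0 ^ (m + 2) * X 1,
      X 0 * X 1 ^ (m + 2), X 0 ^ (m + 1) * X 1 ^ 2}) :
    ∀ s : ℕ, m + 2 ≤ s →
      (J ^ s).colon (Ideal.span {(X 0 : MvPolynomial (Fin 2) K) ^ (m + 3)}) ≤ J ^ (s - 1) ∧
      (J ^ s).colon J = J ^ (s - 1) := by
  have hle : Ideal.span (Set.range fun i : Fin 2 => (X i : MvPolynomial (Fin 2) K) ^ (m + 2)) *
      idealOfVars (Fin 2) K ^ 1 ≤ J := by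
    rw [hJ, pow_one, span_range_X_pow_mul_idealOfVars_fin_two]
    exact Ideal.span_mono (by simp [Set.insert_subset_iff])
  rintro (_ | t) hs
  · omega
  · exact (stmt_12_general 0 hle (hJ ▸ span_le_pow_idealOfVars_fin_two K m)
      (by rw [Fintype.card_fin]; omega)).imp_left le_of_eq
end

section
/- Let R be a commutative Noetherian ring, let I be an ideal of R, and let k ≥ 1 be an integer. Suppose ℓ0 is the strong persistence index of I and ℓ0' is the strong persistence index of I^k. Then ℓ0' < ℓ0/k + 1; equivalently, k(ℓ0' − 1) < ℓ0. -/
/-!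
Since `(A : I ^ (j + 1)) = ((A : I ^ j) : I)`, repeated cancellation of a factor `I` gives
`(I ^ (n + j) : I ^ j) = I ^ n` for all `n ≥ ℓ₀`. With exponents `k * n` and `j = k` this reads
`((I ^ k) ^ (n + 1) : I ^ k) = (I ^ k) ^ n` as soon as `ℓ₀ ≤ k * n`, so every such `n` is at least
`ℓ₀'`. In particular `n = ℓ₀' - 1` does not satisfy `ℓ₀ ≤ k * n`.
-/

theorem colon_smul_eq_colon_colon {R M : Type*} [Semiring R] [AddCommMonoid M] [Module R M]
    (N P : Submodule R M) (I : Ideal R) :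
    N.colon (I • P : Submodule R M) = (N.colon (P : Set M)).colon (I : Set R) := by
  ext r
  simp only [Submodule.mem_colon, SetLike.mem_coe, smul_eq_mul, mul_smul]
  refine ⟨fun h a ha p hp => h _ (Submodule.smul_mem_smul ha hp), fun h x hx => ?_⟩
  induction hx using Submodule.smul_induction_on' with
  | smul a ha p hp => exact h a ha p hp
  | add x _ y _ hx hy => exact smul_add r x y ▸ N.add_mem hx hy

theorem pow_add_colon_pow_eq_pow {R : Type*} [CommSemiring R] {I : Ideal R} {l : ℕ}
    (h : ∀ n, l ≤ n → (I ^ (n + 1)).colon I = I ^ n) {n : ℕ} (hn : l ≤ n) (j : ℕ) :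
    (I ^ (n + j)).colon (I ^ j : Ideal R) = I ^ n := by
  induction j generalizing n with
  | zero => simp
  | succ j ih =>
    calc (I ^ (n + (j + 1))).colon (I ^ (j + 1) : Ideal R)
        = ((I ^ (n + 1 + j)).colon (I ^ j : Ideal R)).colon I := by
          rw [pow_succ' I j, ← smul_eq_mul, colon_smul_eq_colon_colon, add_right_comm, add_assoc]
      _ = (I ^ (n + 1)).colon I := by rw [ih (Nat.le_succ_of_le hn)]
      _ = I ^ n := h n hn

theorem IsStrongPersistenceIndex.le_of_le_mul {R : Type*} [CommRing R] {I : Ideal R}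
    {k l l' n : ℕ} (h : IsStrongPersistenceIndex I l) (h' : IsStrongPersistenceIndex (I ^ k) l')
    (hn : l ≤ k * n) : l' ≤ n := by
  obtain ⟨l_pos, colon_eq, -⟩ := h
  obtain ⟨-, -, l'_le⟩ := h'
  refine l'_le n (Nat.pos_of_mul_pos_left (l_pos.trans_le hn)) fun m hm => ?_
  rw [← pow_mul, ← pow_mul, Nat.mul_succ]
  exact pow_add_colon_pow_eq_pow colon_eq (hn.trans (Nat.mul_le_mul_left k hm)) k

theorem stmt_14_general {R : Type*} [CommRing R] (I : Ideal R) (k l0 l0' : ℕ)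
    (h : IsStrongPersistenceIndex I l0) (h' : IsStrongPersistenceIndex (I ^ k) l0') :
    k * (l0' - 1) < l0 := by
  by_contra! hle
  exact (Nat.sub_one_lt_of_lt h'.1).not_ge (h.le_of_le_mul h' hle)

theorem stmt_14 {R : Type*} [CommRing R] [IsNoetherianRing R] (I : Ideal R) (k : ℕ) (hk : 1 ≤ k)
    (l0 l0' : ℕ) (h : IsStrongPersistenceIndex I l0)
    (h' : IsStrongPersistenceIndex (I ^ k) l0') :
    k * (l0' - 1) < l0 :=
  stmt_14_general I k l0 l0' h h'
end
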